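/- arXiv:1502.02624 — 3 statements merged into one kernel-verified Lean document; each statement's English description precedes it below -/
import Mathlib

section
/- There exists N such that for all n ≥ N and every odd integer d with 2^{n+1} − 7 ≤ d ≤ 2^{n+1} − 5, the 2-density of the set D := {i : 1 ≤ i ≤ d, i odd} \ {2^n − 1} equals 2/(2n−1); that is, every solution U of any length ℓ for D satisfies (2n−1)·s(U) ≥ 2ℓ, and some solution attains (2n−1)·s(U) = 2ℓ. -/
/-- The binary weight `s₂(m)`: the sum of the base-2 digits of `m`. -/
def s2 (m : ℕ) : ℕ := (Nat.digits 2 m).sum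

/-- The shift map on `{0, …, 2^ℓ - 1}`: it fixes `2^ℓ - 1` and sends any other `i`
to the remainder of `2·i` modulo `2^ℓ - 1`. -/
def shift2 (ℓ i : ℕ) : ℕ := if i = 2 ^ ℓ - 1 then i else (2 * i) % (2 ^ ℓ - 1)

/-- `U : ℕ → ℕ` (supported on `D`) is a solution of length `ℓ` for `D`:
`0 ≤ u_d ≤ 2^ℓ - 1` and `∑ d·u_d` is a positive multiple of `2^ℓ - 1`. -/
structure IsSolution (D : Finset ℕ) (ℓ : ℕ) (U : ℕ → ℕ) : Prop where
  len_pos : 1 ≤ ℓ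
  bounded : ∀ d, U d ≤ 2 ^ ℓ - 1
  supp_sub : ∀ d, d ∉ D → U d = 0
  dvd : (2 ^ ℓ - 1) ∣ ∑ d ∈ D, d * U d
  pos : 0 < ∑ d ∈ D, d * U d

/-- The weight `s(U) = ∑_{d ∈ D} s₂(u_d)` of a solution. -/
def weight (D : Finset ℕ) (U : ℕ → ℕ) : ℕ := ∑ d ∈ D, s2 (U d)

/-- The support map `φ_U(k) = (∑_{d ∈ D} d·δ^k(u_d)) / (2^ℓ - 1)` of a solution,
viewed as an `ℓ`-periodic function on `ℕ`. -/
def supportMap (D : Finset ℕ) (ℓ : ℕ) (U : ℕ → ℕ) (k : ℕ) : ℕ :=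
  (∑ d ∈ D, d * (shift2 ℓ)^[k] (U d)) / (2 ^ ℓ - 1)

/-- A solution is irreducible when its support map is injective on `ℤ/ℓℤ`,
i.e. injective on `{0, …, ℓ-1}`. -/
def IrreducibleSol (D : Finset ℕ) (ℓ : ℕ) (U : ℕ → ℕ) : Prop :=
  Set.InjOn (supportMap D ℓ U) ↑(Finset.range ℓ)

/-- `U` is a shift of `V` (coordinatewise iterate of the shift map). -/
def IsShiftOf (ℓ : ℕ) (U V : ℕ → ℕ) : Prop :=
  ∃ k, ∀ d, U d = (shift2 ℓ)^[k] (V d)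

/-- The set of odd integers `1 ≤ i ≤ d`. -/
def oddUpTo (d : ℕ) : Finset ℕ := (Finset.range (d + 1)).filter (fun i => i % 2 = 1)

/-- `D = {i : 1 ≤ i ≤ 2^{n+1} - 3, i odd}`. -/
def oddD (n : ℕ) : Finset ℕ := oddUpTo (2 ^ (n + 1) - 3)

/-- The solution with `u_a = 1` and all other coordinates `0`. -/
def sol1 (a : ℕ) : ℕ → ℕ := fun d => if d = a then 1 else 0

/-- The solution with `u_a = x`, `u_b = y` and all other coordinates `0`. -/
def sol2 (a x b y : ℕ) : ℕ → ℕ := fun d => if d = a then x else if d = b then y else 0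

/-- The solution with `u_a = x`, `u_b = y`, `u_c = z` and all other coordinates `0`. -/
def sol3 (a x b y c z : ℕ) : ℕ → ℕ :=
  fun d => if d = a then x else if d = b then y else if d = c then z else 0


/-- Potential function (shifted by one). -/
def potQ (x : ℕ) : ℕ := 2 * Nat.log 2 x + if 2 ^ Nat.log 2 x = x then 1 else 0

lemma potQ_two_mul (x : ℕ) (hx : 0 < x) : potQ (2 * x) = potQ x + 2 := by
  have h : Nat.log 2 (2 * x) = Nat.log 2 x + 1 := by
    rw [mul_comm]; exact Nat.log_mul_base (by norm_num) (by omega)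
  unfold potQ
  rw [h, pow_succ]
  by_cases h2 : 2 ^ Nat.log 2 x = x
  · rw [if_pos h2, if_pos (by omega)]; ring
  · rw [if_neg h2, if_neg (by omega)]; ring

lemma potQ_one_le (y : ℕ) (hy : 0 < y) : 1 ≤ potQ y := by
  unfold potQ
  by_cases h : y = 1
  · subst h; simp
  · have : 1 ≤ Nat.log 2 y := Nat.le_log_of_pow_le (by norm_num) (by omega)
    omega

lemma potQ_lower (y k : ℕ) (hy : 2 ^ k ≤ y) : 2 * k ≤ potQ y := by
  have : k ≤ Nat.log 2 y := Nat.le_log_of_pow_le (by norm_num) hy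
  unfold potQ
  omega

lemma potQ_step (n y d : ℕ) (hn : 5 ≤ n) (hy : 0 < y) (hd : d + 5 ≤ 2 ^ (n + 1))
    (hd' : d ≠ 2 ^ n - 1) : potQ (y + d) ≤ potQ y + (2 * n - 1) := by
  have h1 := potQ_one_le y hy
  have hx : 2 ^ Nat.log 2 (y + d) ≤ y + d := Nat.pow_log_le_self 2 (by omega)
  have hpn : 0 < 2 ^ n := by positivity
  obtain ⟨m, hm⟩ : ∃ m, m = Nat.log 2 (y + d) := ⟨_, rfl⟩
  have hQ : potQ (y + d) = 2 * m + if 2 ^ m = y + d then 1 else 0 := by rw [hm]; rfl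
  rw [← hm] at hx
  rw [hQ]
  rcases lt_trichotomy m n with h | h | h
  · split_ifs <;> omega
  · subst h
    split_ifs with h2
    · have := potQ_lower y 1 (by omega)
      omega
    · omega
  · rcases Nat.lt_or_ge (n + 1) m with h3 | h3
    · obtain ⟨j, rfl⟩ : ∃ j, m = j + 1 := ⟨m - 1, by omega⟩
      have h4 : 2 ^ (n + 1) ≤ 2 ^ j := Nat.pow_le_pow_right (by norm_num) (by omega)
      have h5 : 2 ^ (j + 1) = 2 * 2 ^ j := by ring
      have := potQ_lower y j (by omega)
      split_ifs <;> omega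
    · have : m = n + 1 := by omega
      subst this
      have := potQ_lower y 2 (by omega)
      split_ifs <;> omega

lemma potQ_multi (n : ℕ) (hn : 5 ≤ n) (S : Finset ℕ)
    (hS : ∀ d ∈ S, d + 5 ≤ 2 ^ (n + 1) ∧ d ≠ 2 ^ n - 1) (b : ℕ → ℕ) (hb : ∀ d, b d < 2)
    (y : ℕ) (hy : 0 < y) :
    potQ (y + ∑ d ∈ S, d * b d) ≤ potQ y + (2 * n - 1) * ∑ d ∈ S, b d := by
  induction S using Finset.induction_on with
  | empty => simp
  | insert a s ha ih =>
    rw [Finset.sum_insert ha, Finset.sum_insert ha]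
    have ih := ih (fun d hd => hS d (Finset.mem_insert_of_mem hd))
    obtain ⟨h1, h2⟩ := hS a (Finset.mem_insert_self _ _)
    have h3 : b a = 0 ∨ b a = 1 := by have := hb a; omega
    rcases h3 with h3 | h3
    · rw [h3]; simpa using ih
    · rw [h3]
      have := potQ_step n (y + ∑ d ∈ s, d * b d) a hn (by omega) h1 h2
      rw [show y + (a * 1 + ∑ d ∈ s, d * b d) = y + ∑ d ∈ s, d * b d + a by ring, mul_add]
      omega

lemma s2_half (u : ℕ) : s2 u = s2 (u / 2) + u % 2 := by
  unfold s2
  rcases Nat.eq_zero_or_pos u with h | h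
  · subst h; simp
  · rw [Nat.digits_def' (by norm_num) h]; simp [add_comm]

lemma walk (n : ℕ) (hn : 5 ≤ n) (S : Finset ℕ)
    (hS : ∀ d ∈ S, d + 5 ≤ 2 ^ (n + 1) ∧ d ≠ 2 ^ n - 1) (l c : ℕ) (U : ℕ → ℕ) (hc : 0 < c)
    (hU : ∀ d, U d < 2 ^ l) (hsum : c + ∑ d ∈ S, d * U d = 2 ^ l * c) (j : ℕ) (hj : j ≤ l) :
    ∃ X, 0 < X ∧ X + ∑ d ∈ S, d * (U d / 2 ^ (l - j)) = 2 ^ j * c ∧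
      potQ c + 2 * j ≤ potQ X + (2 * n - 1) * ∑ d ∈ S, s2 (U d / 2 ^ (l - j)) := by
  induction j with
  | zero =>
    refine ⟨c, hc, ?_, ?_⟩
    · simp [Nat.div_eq_of_lt (hU _)]
    · simp
  | succ j ih =>
    obtain ⟨X, hX, h1, h2⟩ := ih (by omega)
    obtain ⟨r, hr⟩ : ∃ r, r = l - (j + 1) := ⟨_, rfl⟩
    have hl : l = r + (j + 1) := by omega
    rw [← hr]
    have e : l - j = r + 1 := by omega
    rw [e] at h1 h2
    have hdiv : ∀ d, U d / 2 ^ (r + 1) = U d / 2 ^ r / 2 := fun d => by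
      rw [pow_succ, Nat.div_div_eq_div_mul]
    simp only [hdiv] at h1 h2
    have hF : ∑ d ∈ S, d * (U d / 2 ^ r) =
        2 * ∑ d ∈ S, d * (U d / 2 ^ r / 2) + ∑ d ∈ S, d * (U d / 2 ^ r % 2) := by
      rw [Finset.mul_sum, ← Finset.sum_add_distrib]
      refine Finset.sum_congr rfl fun d _ => ?_
      conv_lhs => rw [← Nat.div_add_mod (U d / 2 ^ r) 2]
      ring
    have hW : ∑ d ∈ S, s2 (U d / 2 ^ r) =
        ∑ d ∈ S, s2 (U d / 2 ^ r / 2) + ∑ d ∈ S, (U d / 2 ^ r % 2) := by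
      rw [← Finset.sum_add_distrib]
      exact Finset.sum_congr rfl fun d _ => s2_half _
    have hlt : ∑ d ∈ S, d * (U d / 2 ^ r) < 2 ^ (j + 1) * c := by
      have hle : 2 ^ r * ∑ d ∈ S, d * (U d / 2 ^ r) ≤ ∑ d ∈ S, d * U d := by
        rw [Finset.mul_sum]
        refine Finset.sum_le_sum fun d _ => ?_
        calc 2 ^ r * (d * (U d / 2 ^ r)) = d * (2 ^ r * (U d / 2 ^ r)) := by ring
          _ ≤ d * U d := Nat.mul_le_mul_left _ (Nat.mul_div_le _ _)
      have h3 : 2 ^ r * ∑ d ∈ S, d * (U d / 2 ^ r) < 2 ^ r * (2 ^ (j + 1) * c) := by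
        rw [← mul_assoc, ← pow_add, ← hl]; omega
      exact lt_of_mul_lt_mul_left h3 (Nat.zero_le _)
    obtain ⟨Y, hY⟩ := Nat.exists_eq_add_of_lt hlt
    refine ⟨Y + 1, by omega, by omega, ?_⟩
    have h4 := potQ_multi n hn S hS (fun d => U d / 2 ^ r % 2)
      (fun d => Nat.mod_lt _ (by norm_num)) (Y + 1) (by omega)
    have h5 : Y + 1 + ∑ d ∈ S, d * (U d / 2 ^ r % 2) = 2 * X := by
      have : 2 ^ (j + 1) * c = 2 * (2 ^ j * c) := by ring
      omega
    simp only [h5] at h4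
    rw [potQ_two_mul X hX] at h4
    rw [hW, mul_add (2 * n - 1)]
    omega

/-- For `n` large enough and odd `d` with `2^{n+1} − 7 ≤ d ≤ 2^{n+1} − 5`, the
2-density of `D = {i : 1 ≤ i ≤ d, i odd} \ {2^n − 1}` is `2/(2n−1)`: every solution of
length `ℓ` satisfies `(2n−1)·s(U) ≥ 2ℓ`, and some solution attains equality. -/
theorem density_case_iv :
    ∃ N : ℕ, ∀ n : ℕ, N ≤ n → ∀ d : ℕ, d % 2 = 1 →
      2 ^ (n + 1) - 7 ≤ d → d ≤ 2 ^ (n + 1) - 5 →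
      (∀ ℓ U, IsSolution ((oddUpTo d).erase (2 ^ n - 1)) ℓ U →
        2 * ℓ ≤ (2 * n - 1) * weight ((oddUpTo d).erase (2 ^ n - 1)) U) ∧
      (∃ ℓ U, IsSolution ((oddUpTo d).erase (2 ^ n - 1)) ℓ U ∧
        2 * ℓ = (2 * n - 1) * weight ((oddUpTo d).erase (2 ^ n - 1)) U) := by
  refine ⟨5, fun n hn d hodd hd1 hd2 => ⟨?_, ?_⟩⟩
  · intro l U hU
    have hpl : 2 ^ 1 ≤ 2 ^ l := Nat.pow_le_pow_right (by norm_num) hU.len_pos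
    have hpn : 2 ^ 6 ≤ 2 ^ (n + 1) := Nat.pow_le_pow_right (by norm_num) (by omega)
    obtain ⟨c, hc⟩ := hU.dvd
    have hpos := hU.pos
    have hc0 : 0 < c := by
      rcases Nat.eq_zero_or_pos c with h | h
      · rw [hc, h] at hpos; simp at hpos
      · exact h
    have hsum : c + ∑ d ∈ (oddUpTo d).erase (2 ^ n - 1), d * U d = 2 ^ l * c := by
      rw [hc, Nat.sub_mul, one_mul]
      have : c ≤ 2 ^ l * c := Nat.le_mul_of_pos_left _ (by positivity)
      omega
    obtain ⟨X, hX, h1, h2⟩ := walk n hn ((oddUpTo d).erase (2 ^ n - 1)) (by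
      intro e he
      rw [Finset.mem_erase, oddUpTo, Finset.mem_filter, Finset.mem_range] at he
      refine ⟨by omega, he.1⟩) l c U hc0 (fun e => by have := hU.bounded e; omega) hsum l le_rfl
    simp only [Nat.sub_self, pow_zero, Nat.div_one] at h1 h2
    have : X = c := by omega
    subst this
    unfold weight
    omega
  · obtain ⟨k, rfl⟩ : ∃ k, n = k + 1 := ⟨n - 1, by omega⟩
    have hp : 2 ^ 4 ≤ 2 ^ k := Nat.pow_le_pow_right (by norm_num) (by omega)
    have e1 : 2 ^ (k + 1) = 2 * 2 ^ k := by ring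
    have e2 : 2 ^ (k + 1 + 1) = 4 * 2 ^ k := by ring
    have e3 : 2 ^ (2 * k + 1) = 2 * (2 ^ k * 2 ^ k) := by ring
    have hsq : 16 * 2 ^ k ≤ 2 ^ k * 2 ^ k := Nat.mul_le_mul_right _ (by omega)
    have hs2 : s2 (2 ^ k) = 1 := by
      clear * -
      induction k with
      | zero => simp [s2]
      | succ k ih => rw [s2_half, pow_succ]; simp [ih]
    obtain ⟨a, ha⟩ : ∃ a, a = 2 * 2 ^ k - 3 := ⟨_, rfl⟩
    obtain ⟨b, hb⟩ : ∃ b, b = 3 * 2 ^ k - 1 := ⟨_, rfl⟩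
    have hev : 2 ^ k % 2 = 0 := by
      obtain ⟨i, rfl⟩ : ∃ i, k = i + 1 := ⟨k - 1, by omega⟩
      rw [pow_succ]; omega
    have hab : a ≠ b := by omega
    have haD : a ∈ (oddUpTo d).erase (2 ^ (k + 1) - 1) := by
      rw [Finset.mem_erase, oddUpTo, Finset.mem_filter, Finset.mem_range]; omega
    have hbD : b ∈ (oddUpTo d).erase (2 ^ (k + 1) - 1) := by
      rw [Finset.mem_erase, oddUpTo, Finset.mem_filter, Finset.mem_range]; omega
    have hout : ∀ e, e ≠ a → e ≠ b → sol2 a (2 ^ k) b 1 e = 0 := by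
      intro e h1 h2; simp [sol2, h1, h2]
    have hva : sol2 a (2 ^ k) b 1 a = 2 ^ k := by simp [sol2]
    have hvb : sol2 a (2 ^ k) b 1 b = 1 := by simp [sol2, hab.symm]
    have hS : ∑ e ∈ (oddUpTo d).erase (2 ^ (k + 1) - 1), e * sol2 a (2 ^ k) b 1 e
        = 2 ^ (2 * k + 1) - 1 := by
      rw [Finset.sum_eq_add_of_mem a b haD hbD hab
        (fun e _ he => by rw [hout e he.1 he.2, mul_zero]), hva, hvb, e3, ha, hb, Nat.sub_mul,
        mul_assoc]
      omega
    refine ⟨2 * k + 1, sol2 a (2 ^ k) b 1, ⟨by omega, ?_, ?_, ?_, ?_⟩, ?_⟩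
    · intro e
      unfold sol2
      split_ifs <;> omega
    · intro e he
      exact hout e (fun h => he (h ▸ haD)) (fun h => he (h ▸ hbD))
    · rw [hS]
    · rw [hS]; omega
    · unfold weight
      rw [Finset.sum_eq_add_of_mem a b haD hbD hab
        (fun e _ he => by rw [hout e he.1 he.2]; simp [s2]), hva, hvb, hs2]
      have : s2 1 = 1 := by simp [s2]
      rw [this]
      omega
end

section
/- There exists N such that for all n ≥ N the following holds. Let a ≥ 1, q = 2^a, and let f(x) = ∑_{i=0}^{g} c_{2i+1} x^{2i+1} ∈ F_q[x] with c_{2g+1} ≠ 0, where 3·2^{n−1} − 1 ≤ 2g + 1 ≤ 2^{n+1} − 5. If c_{2^n − 1} = 0, then for every m ≥ 1 the integer S_m(f) is divisible by 2^{⌈2·a·m/(2n−1)⌉} (i.e. the first slope of the associated Newton polygon is at least 2/(2n−1)). -/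
namespace FirstSlope

/-- Next state of the five-state transducer computing the potential, reading bits from the bottom. -/
def nxt (s : Fin 5) (b : Fin 2) : Fin 5 :=
  if b = 1 then ([0, 2, 2, 2, 2] : List (Fin 5)).getD s.val 0
  else ([1, 4, 3, 4, 4] : List (Fin 5)).getD s.val 0

/-- Output of the transducer. -/
def out (s : Fin 5) (b : Fin 2) : ℕ :=
  if b = 1 then ([2, 2, 2, 2, 3] : List ℕ).getD s.val 0
  else ([0, 1, 0, 0, 0] : List ℕ).getD s.val 0

/-- Terminal output. -/
def fin (s : Fin 5) : ℕ := ([1, 1, 0, 0, 0] : List ℕ).getD s.val 0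

/-- The potential of `y` read from state `s`. -/
def V (s : Fin 5) (y : ℕ) : ℕ :=
  if _h : y = 0 then fin s
  else out s (Fin.ofNat 2 y) + V (nxt s (Fin.ofNat 2 y)) (y / 2)
termination_by y
decreasing_by omega

theorem V_zero (s : Fin 5) : V s 0 = fin s := by
  rw [V]; simp

theorem V_step (s : Fin 5) (b : Fin 2) (y : ℕ) :
    V s (2 * y + b.val) = out s b + V (nxt s b) y := by
  by_cases h : 2 * y + b.val = 0
  · have hy : y = 0 := by omega
    have hb : b = 0 := by ext; simp; omega
    subst hy; subst hb
    simp only [V_zero, Fin.val_zero, Nat.mul_zero, Nat.add_zero]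
    revert s; decide
  · rw [V, dif_neg h]
    have h1 : Fin.ofNat 2 (2 * y + b.val) = b := by
      ext; simp [Fin.ofNat]; omega
    have h2 : (2 * y + b.val) / 2 = y := by omega
    rw [h1, h2]

/-- Transition of the automaton recognising admissible exponents (`6` is a dead state). -/
def dn (e : Fin 7) (b : Fin 2) : Fin 7 :=
  if b = 1 then ([1, 3, 2, 3, 5, 5, 6] : List (Fin 7)).getD e.val 6
  else ([6, 2, 5, 4, 5, 5, 6] : List (Fin 7)).getD e.val 6

/-- `acc e b d`: the `b` lowest bits of `d < 2 ^ b` are accepted from state `e`. -/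
def acc : Fin 7 → ℕ → ℕ → Prop
  | e, 0, d => e = 5 ∧ d = 0
  | e, b + 1, d => acc (dn e (Fin.ofNat 2 d)) b (d / 2)

/-- Bounds (shifted by 4) for the pair automaton. -/
def H (e : Fin 7) (s q : Fin 5) (c : Fin 2) : ℕ :=
  (([
   [1, 1, 1, 1, 2, 2, 2, 2, 2, 2, 1, 2, 1, 1, 2, 2, 2, 2, 2, 2, 1, 0, 1, 0, 2, 1, 2, 1, 2, 1, 1, 1, 1, 0, 2, 1, 2, 1, 2, 1, 2, 1, 2, 1, 3, 1, 3, 1, 3, 1],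
   [3, 3, 1, 3, 3, 3, 2, 3, 2, 3, 2, 3, 2, 3, 2, 4, 2, 4, 2, 4, 2, 2, 1, 2, 2, 2, 2, 2, 2, 2, 2, 2, 1, 2, 2, 3, 2, 3, 2, 3, 3, 3, 2, 3, 3, 3, 3, 3, 3, 3],
   [3, 5, 3, 4, 3, 5, 3, 5, 3, 5, 4, 4, 3, 4, 4, 4, 4, 4, 4, 4, 2, 4, 2, 3, 2, 4, 2, 4, 2, 4, 3, 4, 2, 3, 3, 4, 3, 4, 3, 4, 3, 5, 3, 4, 3, 5, 3, 5, 3, 5],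
   [3, 4, 3, 4, 3, 5, 3, 5, 2, 5, 3, 3, 3, 3, 4, 4, 4, 4, 4, 4, 2, 3, 2, 3, 2, 4, 2, 4, 2, 4, 2, 3, 2, 3, 3, 4, 3, 4, 3, 4, 3, 4, 3, 4, 3, 5, 3, 5, 3, 5],
   [5, 5, 4, 5, 5, 5, 5, 5, 5, 5, 4, 5, 4, 5, 4, 6, 4, 6, 4, 6, 4, 4, 3, 4, 4, 4, 4, 4, 4, 4, 4, 4, 3, 4, 4, 5, 4, 5, 4, 5, 5, 5, 4, 5, 5, 5, 5, 5, 5, 5],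
   [5, 7, 5, 6, 5, 7, 5, 7, 5, 7, 6, 6, 4, 6, 6, 6, 5, 6, 5, 6, 4, 6, 4, 5, 4, 6, 4, 6, 4, 6, 5, 6, 4, 5, 5, 6, 4, 6, 4, 6, 5, 7, 5, 6, 5, 7, 5, 7, 5, 7]] : List (List ℕ)).getD e.val []).getD (s.val * 10 + q.val * 2 + c.val) 0

/-- Terminal bounds (shifted by 4). -/
def T (s q : Fin 5) (c : Fin 2) : ℕ :=
  ([4, 7, 5, 6, 5, 7, 5, 7, 5, 7, 6, 6, 4, 6, 6, 6, 5, 6, 5, 6, 4, 6, 4, 5, 4, 6, 4, 6, 4, 6, 5, 6, 4, 5, 5, 6, 4, 6, 4, 6, 5, 7, 5, 6, 5, 7, 5, 7, 4, 7] : List ℕ).getD (s.val * 10 + q.val * 2 + c.val) 0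

/-- low bit of a sum -/
def lo (a b c : Fin 2) : Fin 2 := Fin.ofNat 2 (a.val + b.val + c.val)
/-- carry of a sum -/
def hi (a b c : Fin 2) : Fin 2 := Fin.ofNat 2 ((a.val + b.val + c.val) / 2)

theorem lo_hi (a b c : Fin 2) : a.val + b.val + c.val = 2 * (hi a b c).val + (lo a b c).val := by
  revert a b c; decide

set_option maxRecDepth 100000 in
set_option maxHeartbeats 4000000 in
theorem T_step : ∀ (s q : Fin 5) (c r : Fin 2),
    out s (lo r 0 c) + T (nxt s (lo r 0 c)) (nxt q r) (hi r 0 c) ≤ out q r + T s q c := by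
  decide

set_option maxRecDepth 100000 in
set_option maxHeartbeats 4000000 in
theorem H_step : ∀ (e : Fin 7) (s q : Fin 5) (c r d : Fin 2), dn e d ≠ 6 →
    out s (lo r d c) + H (dn e d) (nxt s (lo r d c)) (nxt q r) (hi r d c) ≤
      out q r + 2 + H e s q c := by
  decide

set_option maxRecDepth 100000 in
set_option maxHeartbeats 4000000 in
theorem T_end : ∀ (s q : Fin 5) (c : Fin 2), V s c.val + 4 ≤ V q 0 + T s q c := by
  have h : ∀ (s q : Fin 5) (c : Fin 2), out s c + fin (nxt s c) + 4 ≤ fin q + T s q c := by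
    decide
  intro s q c
  have := V_step s c 0
  simp only [V_zero, Nat.mul_zero, Nat.zero_add] at this ⊢
  rw [this]; exact h s q c

theorem bits (y : ℕ) : ∃ (z : ℕ) (b : Fin 2), y = 2 * z + b.val :=
  ⟨y / 2, Fin.ofNat 2 y, by simp [Fin.ofNat]; omega⟩

theorem T_main (r : ℕ) : ∀ (s q : Fin 5) (c : Fin 2),
    V s (r + c.val) + 4 ≤ V q r + T s q c := by
  induction r using Nat.strong_induction_on with
  | _ r ih =>
    intro s q c
    by_cases h0 : r = 0
    · subst h0; simpa using T_end s q c
    obtain ⟨z, b, hz⟩ := bits r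
    have h1 : r + c.val = 2 * (z + (hi b 0 c).val) + (lo b 0 c).val := by
      have := lo_hi b 0 c
      simp at this; omega
    rw [h1, hz, V_step, V_step]
    have h2 := ih z (by omega) (nxt s (lo b 0 c)) (nxt q b) (hi b 0 c)
    have h3 := T_step s q c b
    omega

theorem acc_dead (b : ℕ) : ∀ d, ¬ acc 6 b d := by
  induction b with
  | zero => intro d h; exact absurd h.1 (by decide)
  | succ b ih =>
    intro d h
    have hd : ∀ x : Fin 2, dn 6 x = 6 := by decide
    simp only [acc, hd] at h
    exact ih _ h

set_option maxRecDepth 100000 in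
set_option maxHeartbeats 4000000 in
theorem T_le_H : ∀ (s q : Fin 5) (c : Fin 2), T s q c ≤ H 5 s q c := by decide

theorem H_main (b : ℕ) : ∀ (e : Fin 7) (d r : ℕ) (s q : Fin 5) (c : Fin 2), acc e b d →
    V s (r + d + c.val) + 4 ≤ V q r + 2 * b + H e s q c := by
  induction b with
  | zero =>
    intro e d r s q c h
    obtain ⟨rfl, rfl⟩ := h
    have h1 := T_main r s q c
    have h2 := T_le_H s q c
    simp only [Nat.add_zero] at *; omega
  | succ b ih =>
    intro e d r s q c h
    obtain ⟨z, x, hz⟩ := bits r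
    obtain ⟨w, y, hw⟩ := bits d
    have e1 : Fin.ofNat 2 d = y := by ext; simp [Fin.ofNat]; omega
    have e2 : d / 2 = w := by omega
    simp only [acc, e1, e2] at h
    have h1 : r + d + c.val = 2 * (z + w + (hi x y c).val) + (lo x y c).val := by
      have := lo_hi x y c
      omega
    rw [h1, hz, V_step, V_step]
    have h2 := ih (dn e y) w z (nxt s (lo x y c)) (nxt q x) (hi x y c) h
    have h3 := H_step e s q c x y (fun h6 => by rw [h6] at h; exact acc_dead _ _ h)
    omega

theorem acc_succ (e : Fin 7) (b d w : ℕ) (y : Fin 2) (h : d = 2 * w + y.val)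
    (h' : acc (dn e y) b w) : acc e (b + 1) d := by
  have e1 : Fin.ofNat 2 d = y := by ext; simp [Fin.ofNat]; omega
  have e2 : d / 2 = w := by omega
  simp only [acc, e1, e2]; exact h'

theorem bits' (y : ℕ) : (∃ z, y = 2 * z + (0 : Fin 2).val) ∨ (∃ z, y = 2 * z + (1 : Fin 2).val) := by
  rcases Nat.even_or_odd' y with ⟨z, h | h⟩
  · exact Or.inl ⟨z, by simpa using h⟩
  · exact Or.inr ⟨z, by simpa using h⟩

theorem acc5 (b : ℕ) : ∀ d, d < 2 ^ b → acc 5 b d := by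
  induction b with
  | zero => intro d h; exact ⟨rfl, by simpa using h⟩
  | succ b ih =>
    intro d h
    rw [pow_succ] at h
    rcases bits' d with ⟨w, hw⟩ | ⟨w, hw⟩
    · exact acc_succ 5 b d w 0 hw (ih w (by simp at hw; omega))
    · exact acc_succ 5 b d w 1 hw (ih w (by simp at hw; omega))

theorem acc4 (b : ℕ) (d : ℕ) (h : d < 2 ^ (b + 1)) : acc 4 (b + 1) d := by
  rw [pow_succ] at h
  rcases bits' d with ⟨w, hw⟩ | ⟨w, hw⟩
  · exact acc_succ 4 b d w 0 hw (acc5 b w (by simp at hw; omega))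
  · exact acc_succ 4 b d w 1 hw (acc5 b w (by simp at hw; omega))

theorem acc2 (b : ℕ) : ∀ d, d + 1 < 2 ^ b → acc 2 b d := by
  induction b with
  | zero => intro d h; simp at h
  | succ b ih =>
    intro d h
    rw [pow_succ] at h
    rcases bits' d with ⟨w, hw⟩ | ⟨w, hw⟩
    · exact acc_succ 2 b d w 0 hw (acc5 b w (by simp at hw; omega))
    · exact acc_succ 2 b d w 1 hw (ih w (by simp at hw; omega))

theorem acc3 (b : ℕ) : ∀ d, d + 1 < 2 ^ (b + 1) → d + 1 ≠ 2 ^ b → acc 3 (b + 1) d := by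
  induction b with
  | zero => intro d h h'; simp at h h'; omega
  | succ b ih =>
    intro d h h'
    have p1 : 2 ^ (b + 1 + 1) = 2 * 2 ^ (b + 1) := by ring
    have p2 : 2 ^ (b + 1) = 2 * 2 ^ b := by ring
    rcases bits' d with ⟨w, hw⟩ | ⟨w, hw⟩
    · exact acc_succ 3 (b + 1) d w 0 hw (acc4 b w (by simp at hw; omega))
    · exact acc_succ 3 (b + 1) d w 1 hw (ih w (by simp at hw; omega) (by simp at hw; omega))

theorem acc0 (n : ℕ) (d : ℕ) (h : d + 5 ≤ 2 ^ (n + 3)) (hne : d + 1 ≠ 2 ^ (n + 2))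
    (hodd : d % 2 = 1) : acc 0 (n + 3) d := by
  have p1 : 2 ^ (n + 3) = 8 * 2 ^ n := by ring
  have p2 : 2 ^ (n + 2) = 4 * 2 ^ n := by ring
  have p3 : 2 ^ (n + 1) = 2 * 2 ^ n := by ring
  rcases bits' d with ⟨w, hw⟩ | ⟨w, hw⟩
  · simp at hw; omega
  refine acc_succ 0 (n + 2) d w 1 hw ?_
  simp at hw
  change acc 1 (n + 2) w
  rcases bits' w with ⟨v, hv⟩ | ⟨v, hv⟩
  · exact acc_succ 1 (n + 1) w v 0 hv (acc2 (n + 1) v (by simp at hv; omega))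
  · exact acc_succ 1 (n + 1) w v 1 hv (acc3 n v (by simp at hv; omega) (by simp at hv; omega))

theorem V_add (n : ℕ) (d r : ℕ) (h : d + 5 ≤ 2 ^ (n + 3)) (hne : d + 1 ≠ 2 ^ (n + 2))
    (hodd : d % 2 = 1) : V 0 (r + d) ≤ V 0 r + (2 * n + 3) := by
  have h1 := H_main (n + 3) 0 d r 0 0 0 (acc0 n d h hne hodd)
  have h2 : H 0 0 0 0 = 1 := by decide
  rw [h2] at h1
  simp only [Fin.val_zero, Nat.add_zero] at h1
  omega

/-- `Rep D k K`: `K` is a sum of `k ≥ 1` terms `d * 2 ^ j` with `d ∈ D`. -/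
inductive Rep (D : Set ℕ) : ℕ → ℕ → Prop
  | single (d j : ℕ) : d ∈ D → Rep D 1 (d * 2 ^ j)
  | add (k K k' K' : ℕ) : Rep D k K → Rep D k' K' → Rep D (k + k') (K + K')

/-- `Sm D k u`: `u` is a sum of `k` elements of `D`. -/
inductive Sm (D : Set ℕ) : ℕ → ℕ → Prop
  | zero : Sm D 0 0
  | cons (d k u : ℕ) : d ∈ D → Sm D k u → Sm D (k + 1) (u + d)

/-- `RepM D M k K`: `K` is a sum of `k` terms `d * 2 ^ j` with `d ∈ D`, `j < M`. -/
def RepM (D : Set ℕ) : ℕ → ℕ → ℕ → Prop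
  | 0, k, K => k = 0 ∧ K = 0
  | M + 1, k, K => ∃ k0 u0 k1 K1, Sm D k0 u0 ∧ RepM D M k1 K1 ∧ k = k0 + k1 ∧ K = u0 + 2 * K1

theorem Sm.add' {D : Set ℕ} {k u k' u' : ℕ} (h : Sm D k u) (h' : Sm D k' u') :
    Sm D (k + k') (u + u') := by
  induction h' with
  | zero => exact h
  | cons d k' u' hd _ ih => rw [← add_assoc, ← add_assoc]; exact Sm.cons d _ _ hd ih

theorem RepM_add {D : Set ℕ} (M : ℕ) : ∀ {k K k' K' : ℕ}, RepM D M k K → RepM D M k' K' →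
    RepM D M (k + k') (K + K') := by
  induction M with
  | zero => rintro k K k' K' ⟨rfl, rfl⟩ ⟨rfl, rfl⟩; exact ⟨rfl, rfl⟩
  | succ M ih =>
    rintro k K k' K' ⟨a, b, c, d, h1, h2, rfl, rfl⟩ ⟨a', b', c', d', h1', h2', rfl, rfl⟩
    exact ⟨_, _, _, _, h1.add' h1', ih h2 h2', by ring, by ring⟩

theorem RepM_zero {D : Set ℕ} (M : ℕ) : RepM D M 0 0 := by
  induction M with
  | zero => exact ⟨rfl, rfl⟩
  | succ M ih => exact ⟨0, 0, 0, 0, Sm.zero, ih, rfl, rfl⟩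

theorem RepM_single {D : Set ℕ} (M : ℕ) : ∀ (d j : ℕ), d ∈ D → j < M → RepM D M 1 (d * 2 ^ j) := by
  induction M with
  | zero => intro d j _ h; omega
  | succ M ih =>
    intro d j hd hj
    cases j with
    | zero => exact ⟨1, 0 + d, 0, 0, Sm.cons d 0 0 hd Sm.zero, RepM_zero M, rfl, by simp⟩
    | succ j =>
      exact ⟨0, 0, 1, d * 2 ^ j, Sm.zero, ih d j hd (by omega), rfl, by ring⟩

theorem Sm_V {D : Set ℕ} {B : ℕ} (hD : ∀ d ∈ D, ∀ r, V 0 (r + d) ≤ V 0 r + B) {k u : ℕ}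
    (h : Sm D k u) (r : ℕ) : V 0 (r + u) ≤ V 0 r + B * k := by
  induction h with
  | zero => simp
  | cons d k u hd _ ih =>
    have := hD d hd (r + u)
    rw [← add_assoc, mul_add]; omega

theorem RepM_V {D : Set ℕ} {B : ℕ} (hD : ∀ d ∈ D, ∀ r, V 0 (r + d) ≤ V 0 r + B) (M : ℕ) :
    ∀ (k K r r' : ℕ), RepM D M k K → r + K + 1 = (r' + 1) * 2 ^ M →
      2 * M + V 0 r' ≤ V 0 r + B * k := by
  induction M with
  | zero =>
    rintro k K r r' ⟨rfl, rfl⟩ h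
    have : r = r' := by simpa using h
    subst this; simp
  | succ M ih =>
    rintro k K r r' ⟨k0, u0, k1, K1, h0, h1, rfl, rfl⟩ h
    have p : (r' + 1) * 2 ^ (M + 1) = 2 * ((r' + 1) * 2 ^ M) := by ring
    rw [p] at h
    obtain ⟨z, hz⟩ : ∃ z, r + u0 = 2 * z + (1 : Fin 2).val := ⟨(r + u0) / 2, by simp; omega⟩
    have h2 := Sm_V hD h0 r
    rw [hz, V_step] at h2
    have h3 := ih k1 K1 z r' h1 (by simp at hz; omega)
    have h4 : out 0 1 = 2 := by decide
    have h5 : nxt 0 1 = 0 := by decide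
    rw [h4, h5] at h2
    rw [mul_add B]; omega

theorem Rep_to_RepM {D : Set ℕ} (hpos : ∀ d ∈ D, 1 ≤ d) (M : ℕ) (hM : 1 ≤ M) {k K : ℕ}
    (h : Rep D k K) : ∃ K', RepM D M k K' ∧ 1 ≤ K' ∧ K' ≡ K [MOD (2 ^ M - 1)] := by
  have hp : 2 ^ M ≡ 1 [MOD (2 ^ M - 1)] := by
    have h1 : 1 ≤ 2 ^ M := Nat.one_le_two_pow
    exact ((Nat.modEq_iff_dvd' h1).2 (dvd_refl _)).symm
  induction h with
  | single d j hd =>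
    refine ⟨d * 2 ^ (j % M), RepM_single M d _ hd (Nat.mod_lt _ (by omega)),
      Nat.mul_pos (hpos d hd) (by positivity), ?_⟩
    refine Nat.ModEq.mul_left d ?_
    conv_rhs => rw [← Nat.mod_add_div j M, pow_add, pow_mul]
    simpa using (Nat.ModEq.mul_left (2 ^ (j % M)) (hp.pow (j / M))).symm
  | add k K k' K' _ _ ih ih' =>
    obtain ⟨L, h1, h2, h3⟩ := ih
    obtain ⟨L', h1', h2', h3'⟩ := ih'
    exact ⟨L + L', RepM_add M h1 h1', by omega, h3.add h3'⟩

theorem Rep_bound {D : Set ℕ} {B : ℕ} (hD : ∀ d ∈ D, ∀ r, V 0 (r + d) ≤ V 0 r + B)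
    (hpos : ∀ d ∈ D, 1 ≤ d) (M : ℕ) (hM : 1 ≤ M) {k K : ℕ}
    (h : Rep D k K) (hK : 2 ^ M - 1 ∣ K) : 2 * M ≤ B * k := by
  obtain ⟨K', h1, h2, h3⟩ := Rep_to_RepM hpos M hM h
  obtain ⟨t, ht⟩ := (h3.dvd_iff (dvd_refl _)).2 hK
  have hp : 1 ≤ 2 ^ M := Nat.one_le_two_pow
  obtain ⟨r, rfl⟩ : ∃ r, t = r + 1 := ⟨t - 1, by
    rcases t with _ | t
    · simp at ht; omega
    · simp⟩
  have := RepM_V hD M k K' r r h1 (by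
    obtain ⟨Q, hQ⟩ : ∃ Q, 2 ^ M = Q + 1 := ⟨2 ^ M - 1, by omega⟩
    rw [ht, hQ]; simp; ring)
  omega

theorem Rep_double {D : Set ℕ} {k K : ℕ} (h : Rep D k K) : Rep D k (2 * K) := by
  induction h with
  | single d j hd =>
    have := Rep.single d (j + 1) hd
    rwa [pow_succ', ← mul_assoc, mul_comm d 2, mul_assoc] at this
  | add k K k' K' _ _ ih ih' => rw [mul_add]; exact Rep.add _ _ _ _ ih ih'

theorem Rep_pos {D : Set ℕ} (hpos : ∀ d ∈ D, 1 ≤ d) {k K : ℕ} (h : Rep D k K) :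
    1 ≤ k ∧ 1 ≤ K := by
  induction h with
  | single d j hd => exact ⟨le_rfl, Nat.mul_pos (hpos d hd) (by positivity)⟩
  | add k K k' K' _ _ ih ih' => omega

end FirstSlope
namespace FirstSlope

section Sums

variable {R L : Type} [CommRing R] [IsDomain R] [Field L] [Fintype L]

theorem sum_T (π : R →+* L) (T : L →* R) (hπ : ∀ x, π (T x) = x) (K : ℕ)
    (hK : ¬ (Fintype.card L - 1 ∣ K)) : ∑ x : L, T x ^ K = 0 := by
  classical
  obtain ⟨u, hu⟩ := IsCyclic.exists_generator (α := Lˣ)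
  have h1 : (u : L) ^ K ≠ 1 := by
    intro h
    apply hK
    have h2 : u ^ K = 1 := by ext; simpa using h
    have h3 := orderOf_dvd_of_pow_eq_one h2
    rwa [orderOf_eq_card_of_forall_mem_zpowers hu, Nat.card_eq_fintype_card,
      Fintype.card_units] at h3
  have h2 : ∑ x : L, T (u * x) ^ K = ∑ x : L, T x ^ K :=
    Fintype.sum_equiv (Equiv.mulLeft₀ (u : L) u.ne_zero) _ _ (fun x => rfl)
  simp only [map_mul, mul_pow, ← Finset.mul_sum] at h2
  have h3 : (T u ^ K - 1) * ∑ x : L, T x ^ K = 0 := by rw [sub_mul, h2]; ring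
  rcases mul_eq_zero.1 h3 with h | h
  · exfalso; apply h1
    have := congrArg π (sub_eq_zero.1 h)
    simpa [hπ] using this
  · exact h

/-- The span of the functions `2 ^ k * T x ^ K` with `Rep D k K`. -/
def J (T : L →* R) (D : Set ℕ) : Submodule R (L → R) :=
  Submodule.span R {g | ∃ k K, Rep D k K ∧ g = fun x => 2 ^ k * T x ^ K}

theorem J_mul (T : L →* R) (D : Set ℕ) {f g : L → R} (hf : f ∈ J T D) (hg : g ∈ J T D) :
    f * g ∈ J T D := by
  have h := Submodule.mul_mem_mul hf hg
  rw [J, Submodule.span_mul_span] at h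
  refine Submodule.span_mono ?_ h
  rintro _ ⟨_, ⟨k, K, hk, rfl⟩, _, ⟨k', K', hk', rfl⟩, rfl⟩
  refine ⟨k + k', K + K', Rep.add _ _ _ _ hk hk', ?_⟩
  funext x
  simp only [Pi.mul_apply]
  ring

theorem J_sq (T : L →* R) (D : Set ℕ) (hpos : ∀ d ∈ D, 1 ≤ d) {f : L → R} (hf : f ∈ J T D) :
    ∃ g ∈ J T D, f * f = (2 : R) • g := by
  have hf' := hf
  rw [J] at hf
  refine Submodule.span_induction
    (p := fun f _ => f ∈ J T D ∧ ∃ g ∈ J T D, f * f = (2 : R) • g) ?_ ?_ ?_ ?_ hf |>.2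
  · rintro _ ⟨k, K, hk, rfl⟩
    refine ⟨Submodule.subset_span ⟨k, K, hk, rfl⟩, ?_⟩
    obtain ⟨l, rfl⟩ : ∃ l, k = l + 1 := ⟨k - 1, by have := Rep_pos hpos hk; omega⟩
    refine ⟨(2 : R) ^ l • (fun x => 2 ^ (l + 1) * T x ^ (2 * K)),
      Submodule.smul_mem _ _ (Submodule.subset_span ⟨l + 1, 2 * K, Rep_double hk, rfl⟩), ?_⟩
    funext x
    simp only [Pi.mul_apply, Pi.smul_apply, smul_eq_mul]
    ring
  · exact ⟨Submodule.zero_mem _, 0, Submodule.zero_mem _, by simp⟩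
  · rintro a b _ _ ⟨ha, a', ha', ea⟩ ⟨hb, b', hb', eb⟩
    refine ⟨Submodule.add_mem _ ha hb, a' + b' + a * b,
      Submodule.add_mem _ (Submodule.add_mem _ ha' hb') (J_mul T D ha hb), ?_⟩
    have : (a + b) * (a + b) = a * a + b * b + (2 : R) • (a * b) := by
      rw [two_smul]; ring
    rw [this, ea, eb, smul_add, smul_add]
  · rintro c a _ ⟨ha, a', ha', ea⟩
    refine ⟨Submodule.smul_mem _ _ ha, (c * c) • a', Submodule.smul_mem _ _ ha', ?_⟩
    rw [smul_mul_smul_comm, ea, smul_comm]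

theorem J_pow (T : L →* R) (D : Set ℕ) (hpos : ∀ d ∈ D, 1 ≤ d) (h2 : (2 : R) ≠ 0) {f : L → R}
    (hf : (2 : R) • f ∈ J T D) (N : ℕ) : (2 : R) • f ^ 2 ^ N ∈ J T D := by
  induction N with
  | zero => simpa using hf
  | succ N ih =>
    obtain ⟨g, hg, h⟩ := J_sq T D hpos ih
    have : g = (2 : R) • f ^ 2 ^ (N + 1) := by
      funext x
      have hx := congrFun h x
      simp only [Pi.mul_apply, Pi.smul_apply, smul_eq_mul, Pi.pow_apply] at hx ⊢
      apply mul_left_cancel₀ h2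
      rw [← hx, pow_succ 2 N, pow_mul]; ring
    rwa [← this]

theorem J_sum (π : R →+* L) (T : L →* R) (hπ : ∀ x, π (T x) = x) (D : Set ℕ) (e : ℕ)
    (hRep : ∀ k K, Rep D k K → Fintype.card L - 1 ∣ K → e ≤ k) {f : L → R} (hf : f ∈ J T D) :
    (2 : R) ^ e ∣ ∑ x, f x := by
  rw [J] at hf
  refine Submodule.span_induction (p := fun f _ => (2 : R) ^ e ∣ ∑ x, f x) ?_ ?_ ?_ ?_ hf
  · rintro _ ⟨k, K, hk, rfl⟩
    simp only [← Finset.mul_sum]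
    by_cases h : Fintype.card L - 1 ∣ K
    · exact Dvd.dvd.mul_right (pow_dvd_pow _ (hRep k K hk h)) _
    · rw [sum_T π T hπ K h]; simp
  · simp
  · intro a b _ _ ha hb
    simp only [Pi.add_apply, Finset.sum_add_distrib]
    exact dvd_add ha hb
  · intro c a _ ha
    simp only [Pi.smul_apply, smul_eq_mul, ← Finset.mul_sum]
    exact Dvd.dvd.mul_left ha c

theorem int_dvd [CharP L 2] (π : R →+* L) (h2 : (2 : R) ≠ 0) (e : ℕ) :
    ∀ z : ℤ, (2 : R) ^ e ∣ (z : R) → (2 : ℤ) ^ e ∣ z := by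
  induction e with
  | zero => intro z _; simp
  | succ e ih =>
    intro z h
    have hz : (2 : ℤ) ∣ z := by
      have h3 : (2 : R) ∣ (z : R) := (dvd_pow_self 2 (Nat.succ_ne_zero e)).trans h
      obtain ⟨w, hw⟩ := h3
      have h4 := congrArg π hw
      rw [map_intCast, map_mul, map_ofNat, CharTwo.two_eq_zero, zero_mul] at h4
      exact_mod_cast (CharP.intCast_eq_zero_iff L 2 z).1 h4
    obtain ⟨y, rfl⟩ := hz
    rw [pow_succ'] at h ⊢
    push_cast at h
    exact mul_dvd_mul_left 2 (ih y ((mul_dvd_mul_iff_left h2).1 h))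

theorem S_dvd [CharP L 2] [Algebra (ZMod 2) L] (π : R →+* L) (T : L →* R)
    (hπ : ∀ x, π (T x) = x) (h2 : (2 : R) ≠ 0) (hker : ∀ z, π z = 0 → (2 : R) ∣ z)
    (D : Set ℕ) (hpos : ∀ d ∈ D, 1 ≤ d) (e M : ℕ) (hM : Module.finrank (ZMod 2) L = M)
    (hcard : Fintype.card L = 2 ^ M) (heM : e ≤ M)
    (hRep : ∀ k K, Rep D k K → 2 ^ M - 1 ∣ K → e ≤ k)
    (I : Finset ℕ) (w : ℕ → ℕ) (c : ℕ → L) (hI : ∀ i ∈ I, c i = 0 ∨ w i ∈ D) :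
    (2 : ℤ) ^ e ∣ ∑ x : L, (-1 : ℤ) ^
      (Algebra.trace (ZMod 2) L (∑ i ∈ I, c i * x ^ w i)).val := by
  classical
  set bv : L → ℕ := fun x => (Algebra.trace (ZMod 2) L (∑ i ∈ I, c i * x ^ w i)).val with hbv
  have hb01 : ∀ x, bv x = 0 ∨ bv x = 1 := by
    intro x
    have : bv x < 2 := ZMod.val_lt _
    omega
  set I' := I.filter (fun i => w i ∈ D) with hI'
  have hfil : ∀ x : L, ∑ i ∈ I, c i * x ^ w i = ∑ i ∈ I', c i * x ^ w i := by
    intro x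
    rw [hI', Finset.sum_filter]
    refine Finset.sum_congr rfl fun i hi => ?_
    split_ifs with h
    · rfl
    · rw [(hI i hi).resolve_right h, zero_mul]
  set τ : L → R := fun x => ∑ j ∈ Finset.range M, ∑ i ∈ I', T (c i) ^ 2 ^ j * T x ^ (w i * 2 ^ j)
    with hτ
  have hτJ : (2 : R) • τ ∈ J T D := by
    have : (2 : R) • τ = ∑ j ∈ Finset.range M, ∑ i ∈ I',
        (T (c i) ^ 2 ^ j) • (fun x => (2 : R) ^ 1 * T x ^ (w i * 2 ^ j)) := by
      funext x
      simp only [hτ, Pi.smul_apply, Finset.sum_apply, smul_eq_mul, Finset.mul_sum]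
      refine Finset.sum_congr rfl fun j _ => Finset.sum_congr rfl fun i _ => ?_
      ring
    rw [this]
    refine Submodule.sum_mem _ fun j _ => Submodule.sum_mem _ fun i hi => ?_
    refine Submodule.smul_mem _ _ (Submodule.subset_span ⟨1, w i * 2 ^ j, Rep.single _ _ ?_, rfl⟩)
    exact (Finset.mem_filter.1 hi).2
  have hmod : ∀ x, (2 : R) ∣ τ x - (bv x : R) := by
    intro x
    apply hker
    have h1 : algebraMap (ZMod 2) L (Algebra.trace (ZMod 2) L (∑ i ∈ I, c i * x ^ w i)) =
        (bv x : L) := by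
      conv_lhs => rw [← ZMod.natCast_zmod_val (Algebra.trace (ZMod 2) L _)]
      rw [map_natCast]
    rw [FiniteField.algebraMap_trace_eq_sum_pow, hfil, hM, Nat.card_zmod] at h1
    rw [map_sub, map_natCast, ← h1, sub_eq_zero]
    simp only [hτ, map_sum, map_mul, map_pow, hπ]
    refine Finset.sum_congr rfl fun j _ => ?_
    rw [sum_pow_char_pow]
    refine Finset.sum_congr rfl fun i _ => ?_
    rw [mul_pow, pow_mul]
  have hmodN : ∀ x, (2 : R) ^ e ∣ τ x ^ 2 ^ e - (bv x : R) := by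
    intro x
    have h1 := dvd_sub_pow_of_dvd_sub (p := 2) (by exact_mod_cast hmod x) e
    have h3 : (bv x : R) ^ 2 ^ e = bv x := by
      rcases hb01 x with h | h <;> simp [h]
    rw [h3] at h1
    exact (pow_dvd_pow _ (Nat.le_succ e)).trans (by exact_mod_cast h1)
  have hS := J_sum π T hπ D e (by rw [hcard]; exact hRep) (J_pow T D hpos h2 hτJ e)
  apply int_dvd π h2
  push_cast
  have hterm : ∀ x, ((-1 : R)) ^ bv x = 1 - ((2 : R) • τ ^ 2 ^ e) x
      + 2 * (τ x ^ 2 ^ e - (bv x : R)) := by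
    intro x
    simp only [Pi.smul_apply, Pi.pow_apply, smul_eq_mul]
    rcases hb01 x with h | h <;> simp [h]
    ring
  have : ∑ x : L, (-1 : R) ^ bv x = (2 : R) ^ M - ∑ x, ((2 : R) • τ ^ 2 ^ e) x
      + ∑ x, 2 * (τ x ^ 2 ^ e - (bv x : R)) := by
    rw [Finset.sum_congr rfl fun x _ => hterm x, Finset.sum_add_distrib, Finset.sum_sub_distrib]
    simp [hcard]
  rw [this]
  exact dvd_add (dvd_sub (pow_dvd_pow _ heM) hS)
    (Finset.dvd_sum fun x _ => Dvd.dvd.mul_left (hmodN x) _)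

end Sums

end FirstSlope

theorem first_slope_case_ii :
    ∃ N : ℕ, ∀ n : ℕ, N ≤ n → ∀ a : ℕ, 1 ≤ a →
      ∀ (K : Type) [Field K] [Fintype K], Fintype.card K = 2 ^ a →
      ∀ g : ℕ, 3 * 2 ^ (n - 1) - 1 ≤ 2 * g + 1 → 2 * g + 1 ≤ 2 ^ (n + 1) - 5 →
      ∀ c : ℕ → K, c (2 * g + 1) ≠ 0 → c (2 ^ n - 1) = 0 →
      ∀ m : ℕ, 1 ≤ m →
      ∀ (L : Type) [Field L] [Fintype L] [Algebra K L] [Algebra (ZMod 2) L],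
        Module.finrank K L = m →
        (2 : ℤ) ^ (⌈(2 * a * m : ℚ) / (2 * (n : ℚ) - 1)⌉₊) ∣
          ∑ x : L, (-1 : ℤ) ^
            (Algebra.trace (ZMod 2) L
              (∑ i ∈ Finset.range (g + 1),
                algebraMap K L (c (2 * i + 1)) * x ^ (2 * i + 1))).val := by
  refine ⟨2, ?_⟩
  intro n hn a ha K _ _ hK g _ hg c _ hc m hm L _ _ _ _ hfin
  haveI : CharP L 2 := charP_of_injective_algebraMap (algebraMap (ZMod 2) L).injective 2
  haveI : Fact (Nat.Prime 2) := ⟨Nat.prime_two⟩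
  haveI : PerfectRing L 2 := inferInstance
  obtain ⟨l, rfl⟩ : ∃ l, n = l + 2 := ⟨n - 2, by omega⟩
  have hcard : Fintype.card L = 2 ^ (a * m) := by
    rw [Module.card_eq_pow_finrank (K := K), hK, hfin, pow_mul]
  have hM : Module.finrank (ZMod 2) L = a * m := by
    have h := Module.card_eq_pow_finrank (K := ZMod 2) (V := L)
    rw [hcard, ZMod.card] at h
    exact (Nat.pow_right_injective le_rfl h).symm
  have hMpos : 1 ≤ a * m := Nat.mul_pos ha hm
  set D : Set ℕ := {d | d + 5 ≤ 2 ^ (l + 3) ∧ d + 1 ≠ 2 ^ (l + 2) ∧ d % 2 = 1} with hD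
  have hpos : ∀ d ∈ D, 1 ≤ d := fun d hd => by have := hd.2.2; omega
  have hden : (0 : ℚ) < 2 * ((l + 2 : ℕ) : ℚ) - 1 := by push_cast; linarith [(Nat.cast_nonneg l : (0 : ℚ) ≤ l)]
  have key : ∀ k : ℕ, 2 * (a * m) ≤ (2 * l + 3) * k →
      ⌈(2 * a * m : ℚ) / (2 * ((l + 2 : ℕ) : ℚ) - 1)⌉₊ ≤ k := by
    intro k h
    rw [Nat.ceil_le, div_le_iff₀ hden]
    have : (2 * (a * m) : ℚ) ≤ (2 * l + 3) * k := by exact_mod_cast h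
    push_cast
    linarith
  refine FirstSlope.S_dvd (R := WittVector 2 L) WittVector.constantCoeff (WittVector.teichmuller 2)
    (fun x => WittVector.teichmuller_coeff_zero 2 x) ?_ ?_ D hpos _ (a * m) hM hcard ?_ ?_
    (Finset.range (g + 1)) (fun i => 2 * i + 1) (fun i => algebraMap K L (c (2 * i + 1))) ?_
  · exact_mod_cast WittVector.p_nonzero 2 L
  · intro z hz
    have := (WittVector.mem_span_p_iff_coeff_zero_eq_zero z).2 hz
    rw [Ideal.mem_span_singleton] at this
    exact_mod_cast this
  · exact key _ (Nat.mul_le_mul_right _ (by omega))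
  · intro k K' h h'
    exact key _ (FirstSlope.Rep_bound
      (fun d hd r => FirstSlope.V_add l d r hd.1 hd.2.1 hd.2.2) hpos (a * m) hMpos h h')
  · intro i hi
    rw [Finset.mem_range] at hi
    have p1 : 2 ^ (l + 2 + 1) = 8 * 2 ^ l := by ring
    have p1' : 2 ^ (l + 3) = 8 * 2 ^ l := by ring
    have p2 : 2 ^ (l + 2) = 4 * 2 ^ l := by ring
    have p3 : 1 ≤ 2 ^ l := Nat.one_le_two_pow
    by_cases h : 2 * i + 1 = 2 ^ (l + 2) - 1
    · left; rw [h, hc, map_zero]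
    · right
      refine ⟨?_, ?_, ?_⟩ <;> omega
end

section
/- There exists N such that for all n ≥ N the following holds. Let a ≥ 1, q = 2^a, and let f(x) = ∑_{i=0}^{g} c_{2i+1} x^{2i+1} ∈ F_q[x] with c_{2g+1} ≠ 0, where 2g + 1 = 2^{n+1} − 3. If c_{2^n − 1} = 0 and c_{3·2^{n−1} − 1} = 0, then for every m ≥ 1 the integer S_m(f) is divisible by 2^{⌈2·a·m/(2n−1)⌉} (i.e. the first slope of the associated Newton polygon is at least 2/(2n−1)). -/
section core
variable {k n : ℕ} {ι : Type} [Fintype ι]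

/-- the set of one-bits -/
def onesAt (k : ℕ) {ι : Type} [Fintype ι] (r : ι → ZMod k) (d : ι → Finset ℕ) (q : ZMod k) :
    Finset (Σ _ : ι, ℕ) :=
  (Finset.univ.sigma d).filter (fun p => r p.1 + (p.2 : ZMod k) = q)

lemma mem_onesAt {r : ι → ZMod k} {d : ι → Finset ℕ} {q : ZMod k} {p : Σ _ : ι, ℕ} :
    p ∈ onesAt k r d q ↔ p.2 ∈ d p.1 ∧ r p.1 + (p.2 : ZMod k) = q := by
  simp [onesAt]

lemma onesAt_unique {r : ι → ZMod k} {d : ι → Finset ℕ} {q : ZMod k}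
    (h : (onesAt k r d q).card ≤ 1) {t t' : ι} {i i' : ℕ} (h1 : i ∈ d t) (h1' : i' ∈ d t')
    (h2 : r t + (i : ZMod k) = q) (h2' : r t' + (i' : ZMod k) = q) : t = t' ∧ i = i' := by
  have := Finset.card_le_one.1 h ⟨t, i⟩ (mem_onesAt.2 ⟨h1, h2⟩) ⟨t', i'⟩ (mem_onesAt.2 ⟨h1', h2'⟩)
  simpa using this

/-- hypotheses on bit patterns -/
structure GoodBits (n : ℕ) (s : Finset ℕ) : Prop where
  zero : 0 ∈ s
  sub : s ⊆ Finset.range (n + 1)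
  le : s.card ≤ n
  top : s.card = n → n ∈ s ∧ n - 1 ∈ s

lemma GoodBits.hole {s : Finset ℕ} (h : GoodBits n s) (hn : 3 ≤ n) (hs : s.card = n) :
    ∃ j, 1 ≤ j ∧ j + 2 ≤ n ∧ j ∉ s ∧ ∀ i ≤ n, i ≠ j → i ∈ s := by
  have hc : (Finset.range (n+1) \ s).card = 1 := by
    rw [Finset.card_sdiff_of_subset h.sub, hs]; simp
  obtain ⟨j, hj⟩ := Finset.card_eq_one.1 hc
  have hmem : ∀ i, i ∈ Finset.range (n+1) \ s ↔ i = j := by intro i; rw [hj]; simp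
  have hjm := (hmem j).2 rfl
  simp only [Finset.mem_sdiff, Finset.mem_range] at hjm hmem
  have ht := h.top hs
  refine ⟨j, ?_, ?_, hjm.2, ?_⟩
  · rcases Nat.eq_zero_or_pos j with h0 | h0
    · subst h0; exact absurd h.zero hjm.2
    · exact h0
  · have h1 : j ≠ n := by rintro rfl; exact hjm.2 ht.1
    have h2 : j ≠ n - 1 := by rintro rfl; exact hjm.2 ht.2
    omega
  · intro i hi hij
    by_contra hc
    exact hij ((hmem i).1 ⟨by omega, hc⟩)

lemma sum_shift [NeZero k] (κ : ZMod k → ℕ) : ∑ q, κ (q + 1) = ∑ q, κ q :=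
  Equiv.sum_comp (Equiv.addRight (1 : ZMod k)) κ

lemma good_pair [NeZero k] (hn : 3 ≤ n) (r : ι → ZMod k) (d : ι → Finset ℕ)
    (hd : ∀ t, GoodBits n (d t)) (κ : ZMod k → ℕ)
    (hκ : ∀ q, 2 * κ (q + 1) + 1 = κ q + (onesAt k r d q).card) (b : ZMod k) (hb : κ b = 0) (hb1 : κ (b + 1) ≠ 0) :
    ∃ p ∈ onesAt k r d b, ((d p.1).card ≠ n ∨
      ∃ i ∈ d p.1, p.2 < i ∧
        (κ (r p.1 + (i : ZMod k)) ≠ 0 ∨ κ (r p.1 + (i : ZMod k) + 1) ≠ 0)) := by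
  classical
  by_contra hcon
  push Not at hcon
  have hcb := hκ b
  have hcb' := hκ (b - 1)
  rw [sub_add_cancel] at hcb'
  have hsub : onesAt k r d b ⊆ (onesAt k r d b).filter (fun p => p.2 = n) ∪
      (onesAt k r d b).filter (fun p => p.2 + 2 ∈ d p.1 ∧ κ (b + 2) = 0 ∧ κ (b + 2 + 1) = 0) := by
    intro p hp
    obtain ⟨hf, hi⟩ := hcon p hp
    obtain ⟨hp1, hp2⟩ := mem_onesAt.1 hp
    obtain ⟨j, hj1, hj2, hj3, hj4⟩ := (hd p.1).hole hn hf
    have hpn : p.2 < n + 1 := Finset.mem_range.1 ((hd p.1).sub hp1)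
    by_cases hpn' : p.2 = n
    · exact Finset.mem_union_left _ (Finset.mem_filter.2 ⟨hp, hpn'⟩)
    · refine Finset.mem_union_right _ (Finset.mem_filter.2 ⟨hp, ?_⟩)
      have h1 : p.2 + 1 = j := by
        by_contra hne
        have hm := hj4 (p.2 + 1) (by omega) hne
        have := (hi _ hm (by omega)).1
        apply hb1
        rw [← hp2]; push_cast at this; rw [add_assoc]; exact this
      have hm : p.2 + 2 ∈ d p.1 := hj4 _ (by omega) (by omega)
      have := hi _ hm (by omega)
      push_cast at this
      rw [← add_assoc, hp2] at this
      exact ⟨hm, this⟩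
  have h1 : ((onesAt k r d b).filter (fun p => p.2 = n)).card ≤ 1 := by
    rw [Finset.card_le_one]
    rintro ⟨t, i⟩ h ⟨t', i'⟩ h'
    rw [Finset.mem_filter, mem_onesAt] at h h'
    obtain ⟨⟨ha, hb⟩, hc⟩ := h
    obtain ⟨⟨ha', hb'⟩, hc'⟩ := h'
    dsimp only at *
    rw [hc] at ha hb
    rw [hc'] at ha' hb'
    have e1 := (hd t).top (hcon ⟨t, n⟩ (mem_onesAt.2 ⟨ha, hb⟩)).1
    have e2 := (hd t').top (hcon ⟨t', n⟩ (mem_onesAt.2 ⟨ha', hb'⟩)).1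
    have hle : (onesAt k r d (b - 1)).card ≤ 1 := by omega
    have hcast : ((n - 1 : ℕ) : ZMod k) = (n : ZMod k) - 1 := by
      rw [Nat.cast_sub (by omega)]; simp
    have := onesAt_unique hle e1.2 e2.2 (by rw [hcast, ← hb]; ring) (by rw [hcast, ← hb']; ring)
    simp [this.1, hc, hc']
  have h2 : ((onesAt k r d b).filter
      (fun p => p.2 + 2 ∈ d p.1 ∧ κ (b + 2) = 0 ∧ κ (b + 2 + 1) = 0)).card ≤ 1 := by
    rw [Finset.card_le_one]
    rintro ⟨t, i⟩ h ⟨t', i'⟩ h'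
    rw [Finset.mem_filter, mem_onesAt] at h h'
    obtain ⟨⟨ha, hb⟩, hc, hc2, hc3⟩ := h
    obtain ⟨⟨ha', hb'⟩, hc', _⟩ := h'
    dsimp only at *
    have hle : (onesAt k r d (b + 2)).card ≤ 1 := by
      have := hκ (b + 2); omega
    have := onesAt_unique hle hc hc' (by push_cast; rw [← hb]; ring) (by push_cast; rw [← hb']; ring)
    simp [this.1]; omega
  have h3 := Finset.card_le_card hsub
  have h4 := Finset.card_union_le ((onesAt k r d b).filter (fun p => p.2 = n))
      ((onesAt k r d b).filter (fun p => p.2 + 2 ∈ d p.1 ∧ κ (b + 2) = 0 ∧ κ (b + 2 + 1) = 0))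
  omega

/-- active position -/
def Act (κ : ZMod k → ℕ) (q : ZMod k) : Prop := κ q ≠ 0 ∨ κ (q + 1) ≠ 0

open Classical in
lemma type_one [NeZero k] (hn : 3 ≤ n) (r : ι → ZMod k) (d : ι → Finset ℕ)
    (hd : ∀ t, GoodBits n (d t)) (κ : ZMod k → ℕ)
    (hκ : ∀ q, 2 * κ (q + 1) + 1 = κ q + (onesAt k r d q).card) :
    (Finset.univ.filter (fun t => (d t).card = n ∧ ∃ i ∈ d t, Act κ (r t + (i : ZMod k)))).card
      ≤ 2 * ∑ q, κ q := by
  set T := Finset.univ.filter (fun t => (d t).card = n ∧ ∃ i ∈ d t, Act κ (r t + (i : ZMod k)))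
  set R := Finset.univ.filter (fun b : ZMod k => κ b = 0 ∧ κ (b + 1) ≠ 0)
  set O := (Finset.univ.sigma d).filter (fun p => Act κ (r p.1 + (p.2 : ZMod k)))
  -- topmost active one
  have htop : ∀ t, ∃ i, t ∈ T → (i ∈ d t ∧ Act κ (r t + (i : ZMod k)) ∧
      ∀ i' ∈ d t, i < i' → ¬ Act κ (r t + (i' : ZMod k))) := by
    intro t
    by_cases ht : t ∈ T
    · obtain ⟨_, hf, i, hi, hi'⟩ := Finset.mem_filter.1 ht
      have hne : ((d t).filter (fun i : ℕ => Act κ (r t + (i : ZMod k)))).Nonempty :=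
        ⟨i, Finset.mem_filter.2 ⟨hi, hi'⟩⟩
      obtain ⟨m, hm, hmax⟩ := Finset.exists_max_image _ id hne
      rw [Finset.mem_filter] at hm
      refine ⟨m, fun _ => ⟨hm.1, hm.2, fun i' h1 h2 h3 => ?_⟩⟩
      have := hmax i' (Finset.mem_filter.2 ⟨h1, h3⟩)
      simp at this; omega
    · exact ⟨0, fun h => absurd h ht⟩
  choose top htop using htop
  have hgood : ∀ b, ∃ p : (Σ _ : ι, ℕ), b ∈ R → (p ∈ onesAt k r d b ∧ ((d p.1).card ≠ n ∨
      ∃ i ∈ d p.1, p.2 < i ∧ Act κ (r p.1 + (i : ZMod k)))) := by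
    intro b
    by_cases hb : b ∈ R
    · obtain ⟨_, h0, h1⟩ := Finset.mem_filter.1 hb
      obtain ⟨p, hp, hp'⟩ := good_pair hn r d hd κ hκ b h0 h1
      exact ⟨p, fun _ => ⟨hp, hp'⟩⟩
    · by_cases hι : Nonempty ι
      · exact ⟨⟨hι.some, 0⟩, fun h => absurd h hb⟩
      · exfalso
        have : IsEmpty ι := not_nonempty_iff.1 hι
        apply hb
        have h0 : ∀ q, (onesAt k r d q).card = 0 := by
          intro q; rw [Finset.card_eq_zero]; ext ⟨t, i⟩; exact this.elim t
        have hs : ∑ q, (2 * κ (q + 1) + 1) = ∑ q, κ q := by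
          apply Finset.sum_congr rfl; intro q _; rw [hκ, h0]; rfl
        rw [Finset.sum_add_distrib, ← Finset.mul_sum,
          sum_shift κ] at hs
        simp [ZMod.card] at hs
        have := NeZero.pos k
        omega
  choose e he using hgood
  have hinj1 : (T.image (fun t => (⟨t, top t⟩ : Σ _ : ι, ℕ))).card = T.card := by
    apply Finset.card_image_of_injOn
    intro t _ t' _ h
    simp at h; exact h.1
  have hinj2 : (R.image e).card = R.card := by
    apply Finset.card_image_of_injOn
    intro b hb b' hb' h
    have h1 := (mem_onesAt.1 (he b hb).1).2
    have h2 := (mem_onesAt.1 (he b' hb').1).2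
    rw [← h1, h, h2]
  have hdisj : Disjoint (T.image (fun t => (⟨t, top t⟩ : Σ _ : ι, ℕ))) (R.image e) := by
    rw [Finset.disjoint_left]
    intro p hp hp'
    obtain ⟨t, ht, rfl⟩ := Finset.mem_image.1 hp
    obtain ⟨b, hb, hbe⟩ := Finset.mem_image.1 hp'
    obtain ⟨_, h2⟩ := he b hb
    rw [hbe] at h2
    obtain ⟨_, _, h3⟩ := htop t ht
    rcases h2 with h2 | ⟨i, hi, hi2, hi3⟩
    · exact h2 (Finset.mem_filter.1 ht).2.1
    · exact h3 i hi hi2 hi3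
  have hsub : (T.image (fun t => (⟨t, top t⟩ : Σ _ : ι, ℕ))) ∪ (R.image e) ⊆ O := by
    intro p hp
    rcases Finset.mem_union.1 hp with hp | hp
    · obtain ⟨t, ht, rfl⟩ := Finset.mem_image.1 hp
      obtain ⟨h1, h2, _⟩ := htop t ht
      simp [O, h1, h2]
    · obtain ⟨b, hb, rfl⟩ := Finset.mem_image.1 hp
      obtain ⟨h1, h2⟩ := mem_onesAt.1 (he b hb).1
      have h3 : Act κ b := Or.inr (Finset.mem_filter.1 hb).2.2
      rw [← h2] at h3
      simp only [O, Finset.mem_filter, Finset.mem_sigma, Finset.mem_univ, true_and]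
      exact ⟨h1, h3⟩
  have h1 : T.card + R.card ≤ O.card := by
    rw [← hinj1, ← hinj2, ← Finset.card_union_of_disjoint hdisj]
    exact Finset.card_le_card hsub
  have h2 : O.card = ∑ q ∈ Finset.univ.filter (Act κ), (onesAt k r d q).card := by
    rw [Finset.card_eq_sum_card_fiberwise (f := fun p => r p.1 + (p.2 : ZMod k))
      (t := Finset.univ.filter (Act κ))]
    · apply Finset.sum_congr rfl
      intro q hq
      congr 1
      ext p
      rw [mem_onesAt]
      simp only [O, Finset.mem_filter, Finset.mem_sigma, Finset.mem_univ, true_and] at hq ⊢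
      constructor
      · rintro ⟨⟨a, b⟩, c⟩; exact ⟨a, c⟩
      · rintro ⟨a, c⟩; exact ⟨⟨a, c ▸ hq⟩, c⟩
    · intro p hp
      simp only [O, Finset.coe_filter, Set.mem_ofPred_eq, Finset.mem_univ, true_and] at hp ⊢
      exact hp.2
  have h3 : ∑ q ∈ Finset.univ.filter (Act κ), (2 * κ (q + 1) + 1) =
      2 * (∑ q, κ q) + (Finset.univ.filter (Act κ)).card := by
    rw [Finset.sum_add_distrib, ← Finset.mul_sum, Finset.sum_const, smul_eq_mul, mul_one]
    congr 2
    rw [← sum_shift κ]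
    apply Finset.sum_subset (Finset.subset_univ _)
    intro q _ hq
    by_contra hne
    exact hq (Finset.mem_filter.2 ⟨Finset.mem_univ _, Or.inr hne⟩)
  have h4 : ∑ q ∈ Finset.univ.filter (Act κ), κ q = ∑ q, κ q := by
    apply Finset.sum_subset (Finset.subset_univ _)
    intro q _ hq
    by_contra hne
    exact hq (Finset.mem_filter.2 ⟨Finset.mem_univ _, Or.inl hne⟩)
  have h5 : ∑ q ∈ Finset.univ.filter (Act κ), (2 * κ (q + 1) + 1) =
      ∑ q ∈ Finset.univ.filter (Act κ), κ q + O.card := by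
    rw [h2, ← Finset.sum_add_distrib]
    exact Finset.sum_congr rfl fun q _ => hκ q
  have h6 : (Finset.univ.filter (Act κ)).card ≤ R.card + ∑ q, κ q := by
    have hs : Finset.univ.filter (Act κ) ⊆ R ∪ Finset.univ.filter (fun q => κ q ≠ 0) := by
      intro q hq
      have := (Finset.mem_filter.1 hq).2
      simp only [Finset.mem_union, R, Finset.mem_filter, Finset.mem_univ, true_and]
      unfold Act at this
      tauto
    have h7 : (Finset.univ.filter (fun q => κ q ≠ 0)).card ≤ ∑ q, κ q := by
      rw [Finset.card_eq_sum_ones, Finset.sum_filter]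
      apply Finset.sum_le_sum
      intro q _
      split_ifs <;> omega
    have := Finset.card_le_card hs
    have := Finset.card_union_le R (Finset.univ.filter (fun q => κ q ≠ 0))
    omega
  omega

open Classical in
lemma type_two [NeZero k] (hn : 3 ≤ n) (r : ι → ZMod k) (d : ι → Finset ℕ)
    (hd : ∀ t, GoodBits n (d t)) (κ : ZMod k → ℕ)
    (hκ : ∀ q, 2 * κ (q + 1) + 1 = κ q + (onesAt k r d q).card) :
    (Finset.univ.filter (fun t => (d t).card = n ∧ ¬ ∃ i ∈ d t, Act κ (r t + (i : ZMod k)))).card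
      ≤ ∑ t, (n - (d t).card) := by
  set T := Finset.univ.filter (fun t => (d t).card = n ∧ ¬ ∃ i ∈ d t, Act κ (r t + (i : ZMod k)))
    with hT
  have hone : ∀ t ∈ T, ∀ i ∈ d t, (onesAt k r d (r t + (i : ZMod k))).card ≤ 1 := by
    intro t ht i hi
    have h1 : ¬ Act κ (r t + (i : ZMod k)) := fun h => (Finset.mem_filter.1 ht).2.2 ⟨i, hi, h⟩
    unfold Act at h1
    push Not at h1
    have := hκ (r t + (i : ZMod k))
    omega
  have hfill : ∀ t, ∃ j : ℕ, ∃ s : ι, ∃ i : ℕ, t ∈ T → (1 ≤ j ∧ j + 2 ≤ n ∧ j ∉ d t ∧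
      (∀ i ≤ n, i ≠ j → i ∈ d t) ∧ i ∈ d s ∧ r s + (i : ZMod k) = r t + (j : ZMod k)) := by
    intro t
    by_cases ht : t ∈ T
    · obtain ⟨_, hf, hna⟩ := Finset.mem_filter.1 ht
      obtain ⟨j, hj1, hj2, hj3, hj4⟩ := (hd t).hole hn hf
      have h1 : ¬ Act κ (r t + ((j - 1 : ℕ) : ZMod k)) :=
        fun h => hna ⟨_, hj4 (j-1) (by omega) (by omega), h⟩
      have h2 : ¬ Act κ (r t + ((j + 1 : ℕ) : ZMod k)) :=
        fun h => hna ⟨_, hj4 (j+1) (by omega) (by omega), h⟩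
      unfold Act at h1 h2
      push Not at h1 h2
      have e1 : r t + ((j - 1 : ℕ) : ZMod k) + 1 = r t + (j : ZMod k) := by
        rw [Nat.cast_sub hj1]; push_cast; ring
      have e2 : r t + ((j + 1 : ℕ) : ZMod k) = r t + (j : ZMod k) + 1 := by
        push_cast; ring
      rw [e1] at h1; rw [e2] at h2
      have h3 := hκ (r t + (j : ZMod k))
      have h4 : 0 < (onesAt k r d (r t + (j : ZMod k))).card := by omega
      obtain ⟨⟨s, i⟩, hp⟩ := Finset.card_pos.1 h4
      rw [mem_onesAt] at hp
      exact ⟨j, s, i, fun _ => ⟨hj1, hj2, hj3, hj4, hp.1, hp.2⟩⟩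
    · exact ⟨0, t, 0, fun h => absurd h ht⟩
  choose j s i hfill using hfill
  -- key: a one of t at offset j+e (integer shift) determines t
  have key : ∀ t ∈ T, ∀ t' : ι, ∀ x ∈ d t, ∀ x' ∈ d t', r t + (x : ZMod k) = r t' + (x' : ZMod k) →
      t = t' ∧ x = x' := by
    intro t ht t' x hx x' hx' h
    exact onesAt_unique (hone t ht x hx) hx hx' rfl h.symm
  have up : ∀ t ∈ T, ∀ e, (e = 1 ∨ e = 2) → i t + e ∉ d (s t) := by
    intro t ht e he hm
    obtain ⟨h1, h2, h3, h4, h5, h6⟩ := hfill t ht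
    have := key t ht (s t) (j t + e) (h4 _ (by omega) (by omega)) (i t + e) hm (by
      push_cast; rw [← add_assoc, ← add_assoc, h6])
    obtain ⟨ha, hb⟩ := this
    have : i t = j t := by omega
    rw [this, ← ha] at h5
    exact h3 h5
  have castpred : ∀ x : ℕ, 1 ≤ x → ((x - 1 : ℕ) : ZMod k) = (x : ZMod k) - 1 := by
    intro x hx; rw [Nat.cast_sub hx]; simp
  have down : ∀ t ∈ T, 1 ≤ i t → i t - 1 ∉ d (s t) := by
    intro t ht h0 hm
    obtain ⟨h1, h2, h3, h4, h5, h6⟩ := hfill t ht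
    have := key t ht (s t) (j t - 1) (h4 _ (by omega) (by omega)) (i t - 1) hm (by
      rw [castpred _ h0, castpred _ h1, ← add_sub_assoc, ← add_sub_assoc, h6])
    obtain ⟨ha, hb⟩ := this
    have : i t = j t := by omega
    rw [this, ← ha] at h5
    exact h3 h5
  -- mates
  have mate1 : ∀ t ∈ T, j t + 1 ∈ d t ∧
      r t + ((j t + 1 : ℕ) : ZMod k) = r (s t) + ((i t + 1 : ℕ) : ZMod k) := by
    intro t ht
    obtain ⟨h1, h2, h3, h4, h5, h6⟩ := hfill t ht
    exact ⟨h4 _ (by omega) (by omega), by push_cast; rw [← add_assoc, ← add_assoc, h6]⟩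
  have mate2 : ∀ t ∈ T, ∃ x ∈ d t,
      r t + (x : ZMod k) = r (s t) + ((if i t = 0 then 2 else i t - 1 : ℕ) : ZMod k) := by
    intro t ht
    obtain ⟨h1, h2, h3, h4, h5, h6⟩ := hfill t ht
    by_cases h0 : i t = 0
    · refine ⟨j t + 2, h4 _ (by omega) (by omega), ?_⟩
      rw [if_pos h0]
      rw [h0] at h6
      push_cast at h6 ⊢
      rw [← add_assoc, ← h6]; ring
    · refine ⟨j t - 1, h4 _ (by omega) (by omega), ?_⟩
      rw [if_neg h0, castpred _ h1, castpred _ (by omega), ← add_sub_assoc, ← add_sub_assoc, h6]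
  have hfib : ∀ σ, (T.filter (fun t => s t = σ)).card ≤ n - (d σ).card := by
    intro σ
    set U := T.filter (fun t => s t = σ)
    set U' := U.filter (fun t => i t < n)
    set Z := Finset.range (n+1) \ d σ
    have hZ : Z.card = n + 1 - (d σ).card := by
      rw [Finset.card_sdiff_of_subset (hd σ).sub]; simp
    have hU : ∀ t ∈ U, t ∈ T ∧ s t = σ := fun t ht => Finset.mem_filter.1 ht
    have hU' : ∀ t ∈ U', t ∈ U ∧ i t < n := fun t ht => Finset.mem_filter.1 ht
    have hin : ∀ t ∈ U, i t ≤ n := by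
      intro t ht
      have h5 := (hfill t (hU t ht).1).2.2.2.2.1
      have := Finset.mem_range.1 ((hd _).sub h5)
      omega
    have c1 : (U'.image (fun t => i t + 1)).card = U'.card := by
      apply Finset.card_image_of_injOn
      intro t ht t' ht' h
      dsimp only at h
      obtain ⟨a, b⟩ := hU t (hU' t ht).1
      obtain ⟨a', b'⟩ := hU t' (hU' t' ht').1
      obtain ⟨m1, m2⟩ := mate1 t a
      obtain ⟨m1', m2'⟩ := mate1 t' a'
      exact (key t a t' _ m1 _ m1' (by rw [m2, m2', b, b', h])).1
    have c2 : (U.image (fun t => if i t = 0 then 2 else i t - 1)).card = U.card := by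
      apply Finset.card_image_of_injOn
      intro t ht t' ht' h
      dsimp only at h
      obtain ⟨a, b⟩ := hU t ht
      obtain ⟨a', b'⟩ := hU t' ht'
      obtain ⟨x, m1, m2⟩ := mate2 t a
      obtain ⟨x', m1', m2'⟩ := mate2 t' a'
      exact (key t a t' _ m1 _ m1' (by rw [m2, m2', b, b', h])).1
    have c3 : Disjoint (U'.image (fun t => i t + 1))
        (U.image (fun t => if i t = 0 then 2 else i t - 1)) := by
      rw [Finset.disjoint_left]
      intro y hy hy'
      obtain ⟨t, ht, rfl⟩ := Finset.mem_image.1 hy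
      obtain ⟨t', ht', h⟩ := Finset.mem_image.1 hy'
      obtain ⟨a, b⟩ := hU t (hU' t ht).1
      obtain ⟨a', b'⟩ := hU t' ht'
      obtain ⟨m1, m2⟩ := mate1 t a
      obtain ⟨x', m1', m2'⟩ := mate2 t' a'
      have := (key t a t' _ m1 _ m1' (by rw [m2, m2', b, b', h])).1
      subst this
      split_ifs at h <;> omega
    have c4 : (U'.image (fun t => i t + 1)) ∪
        (U.image (fun t => if i t = 0 then 2 else i t - 1)) ⊆ Z := by
      intro y hy
      rcases Finset.mem_union.1 hy with hy | hy
      · obtain ⟨t, ht, rfl⟩ := Finset.mem_image.1 hy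
        obtain ⟨a, b⟩ := hU t (hU' t ht).1
        have := (hU' t ht).2
        exact Finset.mem_sdiff.2 ⟨Finset.mem_range.2 (by omega), b ▸ up t a 1 (Or.inl rfl)⟩
      · obtain ⟨t, ht, rfl⟩ := Finset.mem_image.1 hy
        obtain ⟨a, b⟩ := hU t ht
        have h3 := hin t ht
        by_cases h0 : i t = 0
        · have := up t a 2 (Or.inr rfl)
          rw [h0, b] at this
          simp only [h0, if_true]
          exact Finset.mem_sdiff.2 ⟨Finset.mem_range.2 (by omega), this⟩
        · simp only [h0, if_false]
          exact Finset.mem_sdiff.2 ⟨Finset.mem_range.2 (by omega), b ▸ down t a (by omega)⟩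
    have c5 : U'.card + U.card ≤ Z.card := by
      rw [← c1, ← c2, ← Finset.card_union_of_disjoint c3]
      exact Finset.card_le_card c4
    have c6 : (U.filter (fun t => ¬ i t < n)).card ≤ 1 := by
      rw [Finset.card_le_one]
      intro t ht t' ht'
      obtain ⟨ht, h⟩ := Finset.mem_filter.1 ht
      obtain ⟨ht', h'⟩ := Finset.mem_filter.1 ht'
      have e1 := hin t ht
      have e2 := hin t' ht'
      obtain ⟨a, b⟩ := hU t ht
      obtain ⟨a', b'⟩ := hU t' ht'
      obtain ⟨m1, m2⟩ := mate1 t a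
      obtain ⟨m1', m2'⟩ := mate1 t' a'
      exact (key t a t' _ m1 _ m1' (by rw [m2, m2', b, b', show i t = i t' by omega])).1
    have c7 : U'.card + (U.filter (fun t => ¬ i t < n)).card = U.card :=
      Finset.card_filter_add_card_filter_not _
    have hle := (hd σ).le
    by_cases hfull : (d σ).card = n
    · have c8 : (U.filter (fun t => ¬ i t < n)).card = 0 := by
        rw [Finset.card_eq_zero, Finset.filter_eq_empty_iff]
        intro t ht h
        have e1 := hin t ht
        obtain ⟨a, b⟩ := hU t ht
        have := down t a (by omega)
        rw [show i t = n by omega, b] at this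
        exact this ((hd σ).top hfull).2
      omega
    · omega
  calc T.card = ∑ σ, (T.filter (fun t => s t = σ)).card :=
        Finset.card_eq_sum_card_fiberwise (fun _ _ => Finset.mem_coe.2 (Finset.mem_univ _))
    _ ≤ _ := Finset.sum_le_sum fun σ _ => hfib σ

lemma core_bound [NeZero k] (hn : 3 ≤ n) (r : ι → ZMod k) (d : ι → Finset ℕ)
    (hd : ∀ t, GoodBits n (d t)) (κ : ZMod k → ℕ)
    (hκ : ∀ q, 2 * κ (q + 1) + 1 = κ q + (onesAt k r d q).card) : 2 * k ≤ (2 * n - 1) * Fintype.card ι := by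
  classical
  have h1 := type_one hn r d hd κ hκ
  have h2 := type_two hn r d hd κ hκ
  set C := ∑ q, κ q
  set Δ := ∑ t, (n - (d t).card)
  have h3 : (Finset.univ.filter (fun t => (d t).card = n)).card ≤ 2 * C + Δ := by
    have : Finset.univ.filter (fun t => (d t).card = n) ⊆
      Finset.univ.filter (fun t => (d t).card = n ∧ ∃ i ∈ d t, Act κ (r t + (i : ZMod k))) ∪
      Finset.univ.filter (fun t => (d t).card = n ∧ ¬ ∃ i ∈ d t, Act κ (r t + (i : ZMod k))) := by
      intro t ht
      simp only [Finset.mem_union, Finset.mem_filter, Finset.mem_univ, true_and] at ht ⊢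
      by_cases hx : ∃ i ∈ d t, Act κ (r t + (i : ZMod k))
      · exact Or.inl ⟨ht, hx⟩
      · exact Or.inr ⟨ht, hx⟩
    have h := Finset.card_le_card this
    have := Finset.card_union_le (Finset.univ.filter (fun t => (d t).card = n ∧ ∃ i ∈ d t, Act κ (r t + (i : ZMod k)))) (
      Finset.univ.filter (fun t => (d t).card = n ∧ ¬ ∃ i ∈ d t, Act κ (r t + (i : ZMod k))))
    omega
  have h4 : (Finset.univ.filter (fun t => ¬ (d t).card = n)).card ≤ Δ := by
    rw [Finset.card_eq_sum_ones, Finset.sum_filter]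
    apply Finset.sum_le_sum
    intro t _
    have := (hd t).le
    split_ifs <;> omega
  have h5 : (Finset.univ.filter (fun t => (d t).card = n)).card +
      (Finset.univ.filter (fun t => ¬ (d t).card = n)).card = Fintype.card ι :=
    Finset.card_filter_add_card_filter_not _
  have h6 : ∑ q, (onesAt k r d q).card = ∑ t, (d t).card := by
    rw [← Finset.card_sigma Finset.univ d]
    exact (Finset.card_eq_sum_card_fiberwise (fun _ _ => Finset.mem_coe.2 (Finset.mem_univ _))).symm
  have h7 : 2 * C + k = C + ∑ t, (d t).card := by
    rw [← h6, ← Finset.sum_add_distrib]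
    rw [← Finset.sum_congr rfl (fun q _ => hκ q), Finset.sum_add_distrib, ← Finset.mul_sum,
      sum_shift κ]
    simp [C, ZMod.card]
  have h8 : Δ + ∑ t, (d t).card = n * Fintype.card ι := by
    rw [← Finset.sum_add_distrib, Finset.sum_congr rfl (g := fun _ => n)]
    · simp [mul_comm]
    · intro t _
      have := (hd t).le
      omega
  have h9 : (2 * n - 1) * Fintype.card ι + Fintype.card ι = 2 * (n * Fintype.card ι) := by
    obtain ⟨m, rfl⟩ : ∃ m, n = m + 1 := ⟨n - 1, by omega⟩
    rw [show 2 * (m + 1) - 1 = 2 * m + 1 by omega]; ring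
  omega
end core

lemma two_pow_mod (k e : ℕ) : 2 ^ (e % k) ≡ 2 ^ e [MOD (2 ^ k - 1)] := by
  have h1 : 2 ^ k ≡ 1 [MOD (2 ^ k - 1)] :=
    ((Nat.modEq_iff_dvd' Nat.one_le_two_pow).2 dvd_rfl).symm
  conv_rhs => rw [← Nat.mod_add_div e k, pow_add, pow_mul]
  have := (h1.pow (e / k)).mul_left (2 ^ (e % k))
  simpa using this.symm

lemma carries {k : ℕ} [NeZero k] (c : ZMod k → ℕ) (hpos : 0 < ∑ i ∈ Finset.range k, 2 ^ i * c i)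
    (hdvd : 2 ^ k - 1 ∣ ∑ i ∈ Finset.range k, 2 ^ i * c i) :
    ∃ κ : ZMod k → ℕ, ∀ q, 2 * κ (q + 1) + 1 = κ q + c q := by
  have hk := NeZero.pos k
  obtain ⟨Q, hQ⟩ : ∃ Q, 2 ^ k = Q + 1 := ⟨2 ^ k - 1, by have := Nat.one_le_two_pow (n := k); omega⟩
  have hQ' : 2 ^ k - 1 = Q := by omega
  rw [hQ'] at hdvd
  have hcop : Nat.Coprime Q 2 := by
    rw [Nat.coprime_two_right]
    have : Even (2 ^ k) := (even_two).pow_of_ne_zero (by omega)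
    rw [hQ] at this
    exact Nat.not_even_iff_odd.1 (fun h => by
      have := Nat.even_add_one.1 this; contradiction)
  have hQpos : 0 < Q := by
    rcases Nat.eq_zero_or_pos Q with h | h
    · subst h; simp at hcop
    · exact h
  set X : ZMod k → ℕ := fun q => ∑ i ∈ Finset.range k, 2 ^ i * c (q + i) with hX
  have hstep : ∀ q, 2 * X (q + 1) = X q + Q * c q := by
    intro q
    have h1 := Finset.sum_range_succ (fun i : ℕ => 2 ^ i * c (q + (i : ZMod k))) k
    rw [Finset.sum_range_succ'] at h1
    have h2 : ∑ i ∈ Finset.range k, 2 ^ (i + 1) * c (q + ((i + 1 : ℕ) : ZMod k)) =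
        2 * X (q + 1) := by
      simp only [hX]
      rw [Finset.mul_sum]
      apply Finset.sum_congr rfl
      intro i _
      rw [show q + ((i + 1 : ℕ) : ZMod k) = q + 1 + (i : ZMod k) by push_cast; ring]
      ring
    rw [h2] at h1
    simp only [Nat.cast_zero, add_zero, pow_zero, one_mul, CharP.cast_eq_zero, hQ] at h1
    change _ = X q + _ at h1
    have : (Q + 1) * c q = Q * c q + c q := by ring
    omega
  have hall : ∀ m : ℕ, 0 < X (m : ZMod k) ∧ Q ∣ X (m : ZMod k) := by
    intro m
    induction m with
    | zero => simpa [hX] using ⟨hpos, hdvd⟩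
    | succ m ih =>
      have := hstep (m : ZMod k)
      push_cast
      refine ⟨by omega, ?_⟩
      apply hcop.dvd_of_dvd_mul_left
      rw [this]
      exact dvd_add ih.2 (dvd_mul_right _ _)
  have hall' : ∀ q, ∃ w, X q = Q * (w + 1) := by
    intro q
    obtain ⟨h1, w, h2⟩ := hall q.val
    rw [ZMod.natCast_zmod_val] at h1 h2
    obtain ⟨w', rfl⟩ : ∃ w', w = w' + 1 := ⟨w - 1, by
      rcases Nat.eq_zero_or_pos w with h | h
      · subst h; omega
      · omega⟩
    exact ⟨w', h2⟩
  choose κ hκ using hall'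
  refine ⟨κ, fun q => ?_⟩
  have := hstep q
  rw [hκ, hκ] at this
  have h3 : Q * (2 * (κ (q + 1) + 1)) = Q * (κ q + 1 + c q) := by linarith
  have := Nat.eq_of_mul_eq_mul_left hQpos h3
  omega

/-- binary support -/
def bitset (a : ℕ) : Finset ℕ := a.bitIndices.toFinset

lemma sum_bitset (a : ℕ) : ∑ i ∈ bitset a, 2 ^ i = a := Finset.sum_toFinset_bitIndices_two_pow a

lemma goodBits_of {n D : ℕ} (hn : 3 ≤ n) (h1 : Odd D) (h2 : D ≤ 2 ^ (n + 1) - 3)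
    (h3 : D ≠ 2 ^ n - 1) (h4 : D ≠ 3 * 2 ^ (n - 1) - 1) : GoodBits n (bitset D) := by
  have hp : ∀ m, ∑ i ∈ Finset.range m, 2 ^ i = 2 ^ m - 1 := fun m => Nat.geomSum_eq (le_refl 2) m |>.trans (by simp)
  have hbig : 3 < 2 ^ (n + 1) := by
    calc 3 < 2 ^ 2 := by norm_num
      _ ≤ _ := Nat.pow_le_pow_right (by norm_num) (by omega)
  have hsub : bitset D ⊆ Finset.range (n + 1) := by
    intro i hi
    rw [Finset.mem_range]
    have := Nat.two_pow_le_of_mem_bitIndices (List.mem_toFinset.1 hi)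
    exact (Nat.pow_lt_pow_iff_right (le_refl 2)).1 (by omega)
  have hs := sum_bitset D
  have hsd := Finset.sum_sdiff (f := fun i => 2 ^ i) hsub
  rw [hp, hs] at hsd
  have hcard := Finset.card_sdiff_of_subset hsub
  have hle := Finset.card_le_card hsub
  rw [Finset.card_range] at hcard hle
  have hlen : (bitset D).card ≤ n := by
    by_contra hc
    have : (Finset.range (n + 1) \ bitset D).card = 0 := by omega
    rw [Finset.card_eq_zero] at this
    rw [this] at hsd
    simp at hsd
    omega
  refine ⟨?_, hsub, hlen, fun hf => ?_⟩
  · rw [bitset, List.mem_toFinset, Nat.mem_bitIndices]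
    simpa [Nat.testBit_zero] using Nat.odd_iff.1 h1
  · have : (Finset.range (n + 1) \ bitset D).card = 1 := by omega
    obtain ⟨j, hj⟩ := Finset.card_eq_one.1 this
    rw [hj, Finset.sum_singleton] at hsd
    have hmem : ∀ i ≤ n, i ∉ bitset D → i = j := by
      intro i hi hi'
      have : i ∈ Finset.range (n + 1) \ bitset D :=
        Finset.mem_sdiff.2 ⟨Finset.mem_range.2 (by omega), hi'⟩
      rw [hj] at this
      simpa using this
    have e1 : 2 ^ (n + 1) = 2 * 2 ^ n := by ring
    have e2 : 2 ^ n = 2 * 2 ^ (n - 1) := by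
      conv_lhs => rw [show n = n - 1 + 1 by omega]
      ring
    constructor
    · by_contra hc
      have := hmem n le_rfl hc
      subst this
      omega
    · by_contra hc
      have := hmem (n - 1) (by omega) hc
      subst this
      omega

lemma density {k n : ℕ} (hk : 1 ≤ k) (hn : 3 ≤ n) {ι : Type} [Fintype ι] [Nonempty ι]
    (r : ι → ℕ) (D : ι → ℕ) (h1 : ∀ t, Odd (D t)) (h2 : ∀ t, D t ≤ 2 ^ (n + 1) - 3)
    (h3 : ∀ t, D t ≠ 2 ^ n - 1) (h4 : ∀ t, D t ≠ 3 * 2 ^ (n - 1) - 1)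
    (hdvd : 2 ^ k - 1 ∣ ∑ t, 2 ^ (r t) * D t) : 2 * k ≤ (2 * n - 1) * Fintype.card ι := by
  haveI : NeZero k := ⟨by omega⟩
  set c : ZMod k → ℕ := fun q => (onesAt k (fun t => (r t : ZMod k)) (fun t => bitset (D t)) q).card
    with hc
  have hgb : ∀ t, GoodBits n (bitset (D t)) := fun t => goodBits_of hn (h1 t) (h2 t) (h3 t) (h4 t)
  have e1 : ∑ i ∈ Finset.range k, 2 ^ i * c i = ∑ q : ZMod k, 2 ^ q.val * c q := by
    refine Finset.sum_nbij' (fun i : ℕ => (i : ZMod k)) (fun q => q.val) ?_ ?_ ?_ ?_ ?_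
    · intro i _; simp
    · intro q _; simpa using ZMod.val_lt q
    · intro i hi; simpa using ZMod.val_cast_of_lt (Finset.mem_range.1 hi)
    · intro q _; simp
    · intro i hi; rw [ZMod.val_cast_of_lt (Finset.mem_range.1 hi)]
  have e2 : ∑ q : ZMod k, 2 ^ q.val * c q =
      ∑ p ∈ Finset.univ.sigma (fun t => bitset (D t)), 2 ^ ((r p.1 + p.2) % k) := by
    rw [← Finset.sum_fiberwise_of_maps_to (s := Finset.univ.sigma (fun t => bitset (D t)))
      (t := (Finset.univ : Finset (ZMod k)))
      (g := fun p => (r p.1 : ZMod k) + (p.2 : ZMod k)) (fun _ _ => Finset.mem_univ _)]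
    apply Finset.sum_congr rfl
    intro q _
    rw [hc]
    dsimp only [onesAt]
    rw [Finset.card_eq_sum_ones, Finset.mul_sum]
    apply Finset.sum_congr rfl
    intro p hp
    have := (Finset.mem_filter.1 hp).2
    rw [← this, ← Nat.cast_add, ZMod.val_natCast, mul_one]
  have e3 : ∑ t, 2 ^ (r t) * D t =
      ∑ p ∈ Finset.univ.sigma (fun t => bitset (D t)), 2 ^ (r p.1 + p.2) := by
    rw [Finset.sum_sigma]
    apply Finset.sum_congr rfl
    intro t _
    conv_lhs => rw [← sum_bitset (D t)]
    rw [Finset.mul_sum]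
    apply Finset.sum_congr rfl
    intro i _
    rw [pow_add]
  have e4 : ∑ p ∈ Finset.univ.sigma (fun t => bitset (D t)), 2 ^ ((r p.1 + p.2) % k) ≡
      ∑ p ∈ Finset.univ.sigma (fun t => bitset (D t)), 2 ^ (r p.1 + p.2) [MOD (2 ^ k - 1)] :=
    Nat.ModEq.sum fun p _ => two_pow_mod k _
  have hd' : 2 ^ k - 1 ∣ ∑ i ∈ Finset.range k, 2 ^ i * c i := by
    rw [e1, e2]
    rw [e3] at hdvd
    exact (e4.dvd_iff dvd_rfl).2 hdvd
  have hpos : 0 < ∑ i ∈ Finset.range k, 2 ^ i * c i := by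
    rw [e1, e2]
    apply Finset.sum_pos
    · intros; positivity
    · obtain ⟨t⟩ := ‹Nonempty ι›
      exact ⟨⟨t, 0⟩, Finset.mem_sigma.2 ⟨Finset.mem_univ _, (hgb t).zero⟩⟩
  obtain ⟨κ, hκ⟩ := carries c hpos hd'
  exact core_bound hn (fun t => (r t : ZMod k)) (fun t => bitset (D t)) hgb κ hκ

lemma card_bitset (a : ℕ) : (Nat.digits 2 a).sum = (bitset a).card := by
  rw [bitset, List.toFinset_card_of_nodup Nat.bitIndices_nodup]
  induction a using Nat.strong_induction_on with
  | _ a ih =>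
    rcases Nat.eq_zero_or_pos a with h | h
    · subst h; simp
    · rcases Nat.even_or_odd' a with ⟨m, hm | hm⟩
      · have e : Nat.digits 2 a = 0 :: Nat.digits 2 m := by
          rw [Nat.digits_def' (by norm_num) h]
          congr 1
          · omega
          · congr 1; omega
        rw [e, List.sum_cons, ih m (by omega), hm, Nat.bitIndices_two_mul, List.length_map, zero_add]
      · have e : Nat.digits 2 a = 1 :: Nat.digits 2 m := by
          rw [Nat.digits_def' (by norm_num) h]
          congr 1
          · omega
          · congr 1; omega
        rw [e, List.sum_cons, ih m (by omega), hm, Nat.bitIndices_two_mul_add_one, List.length_cons,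
          List.length_map, add_comm]

lemma factorial_bits (a : ℕ) : ∃ o, Odd o ∧ 2 ^ (bitset a).card * a.factorial = 2 ^ a * o := by
  have h1 := sub_one_mul_padicValNat_factorial (p := 2) a
  rw [card_bitset] at h1
  have hle : (bitset a).card ≤ a := by rw [← card_bitset]; exact Nat.digit_sum_le 2 a
  simp only [Nat.add_one_sub_one, one_mul] at h1
  obtain ⟨o, ho⟩ : 2 ^ padicValNat 2 a.factorial ∣ a.factorial := pow_padicValNat_dvd
  refine ⟨o, ?_, ?_⟩
  · rw [← Nat.not_even_iff_odd, even_iff_two_dvd]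
    intro hd
    have : 2 ^ (padicValNat 2 a.factorial + 1) ∣ a.factorial := by
      conv_rhs => rw [ho]
      rw [pow_succ]; exact Nat.mul_dvd_mul_left _ hd
    exact pow_succ_padicValNat_not_dvd (Nat.factorial_ne_zero a) this
  · rw [ho, h1, ← mul_assoc, ← pow_add, Nat.add_sub_cancel' hle]

lemma multinomial_bits {α : Type*} (s : Finset α) (a : α → ℕ) (M : ℕ)
    (h : ∑ i ∈ s, a i = 2 ^ M) :
    2 ^ (∑ i ∈ s, (bitset (a i)).card) ∣ 2 * Nat.multinomial s a := by
  choose o ho ho' using factorial_bits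
  have h1 := Nat.multinomial_spec s a
  rw [h] at h1
  have h2 := ho' (2 ^ M)
  have h3 : (bitset (2 ^ M)).card = 1 := by simp [bitset]
  rw [h3, pow_one] at h2
  have h4 : 2 ^ (∑ i ∈ s, (bitset (a i)).card) * ∏ i ∈ s, (a i).factorial =
      2 ^ (2 ^ M) * ∏ i ∈ s, o (a i) := by
    rw [← h, ← Finset.prod_pow_eq_pow_sum, ← Finset.prod_pow_eq_pow_sum,
      ← Finset.prod_mul_distrib, ← Finset.prod_mul_distrib]
    exact Finset.prod_congr rfl fun i _ => ho' _
  have h5 : (∏ i ∈ s, o (a i)) * (2 * Nat.multinomial s a) =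
      2 ^ (∑ i ∈ s, (bitset (a i)).card) * o (2 ^ M) := by
    apply Nat.eq_of_mul_eq_mul_left (show 0 < 2 ^ (2 ^ M) by positivity)
    calc _ = 2 * ((2 ^ (2 ^ M) * ∏ i ∈ s, o (a i)) * Nat.multinomial s a) := by ring
      _ = 2 * (2 ^ (∑ i ∈ s, (bitset (a i)).card) *
          ((∏ i ∈ s, (a i).factorial) * Nat.multinomial s a)) := by rw [← h4]; ring
      _ = 2 ^ (∑ i ∈ s, (bitset (a i)).card) * (2 * (2 ^ M).factorial) := by rw [h1]; ring
      _ = _ := by rw [h2]; ring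
  have hodd : Odd (∏ i ∈ s, o (a i)) :=
    Finset.prod_induction _ Odd (fun _ _ => Odd.mul) odd_one (fun i _ => ho _)
  have hcop : Nat.Coprime (2 ^ (∑ i ∈ s, (bitset (a i)).card)) (∏ i ∈ s, o (a i)) :=
    Nat.Coprime.pow_left _ (Nat.coprime_two_left.2 hodd)
  apply hcop.dvd_of_dvd_mul_left
  rw [h5]; exact dvd_mul_right _ _

section witt
variable {L : Type} [Field L] [Fintype L] [CharP L 2]

open WittVector

lemma two_dvd_iff (x : WittVector 2 L) : (2 : WittVector 2 L) ∣ x ↔ x.coeff 0 = 0 := by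
  rw [← WittVector.mem_span_p_iff_coeff_zero_eq_zero, Ideal.mem_span_singleton]
  norm_cast

lemma int_dvd_of_witt (E : ℕ) : ∀ N : ℤ, (2 : WittVector 2 L) ^ E ∣ (N : WittVector 2 L) →
    (2 : ℤ) ^ E ∣ N := by
  induction E with
  | zero => intro N _; simp
  | succ E ih =>
    intro N h
    have h0 : (2 : WittVector 2 L) ∣ (N : WittVector 2 L) :=
      (dvd_pow_self _ (Nat.succ_ne_zero E)).trans h
    rw [two_dvd_iff] at h0
    have h1 : WittVector.constantCoeff (N : WittVector 2 L) = (0 : L) := h0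
    rw [map_intCast, CharP.intCast_eq_zero_iff L 2] at h1
    obtain ⟨N', rfl⟩ := h1
    have h2 : (2 : WittVector 2 L) ≠ 0 := by
      have := WittVector.p_nonzero 2 L
      exact_mod_cast this
    push_cast at h ⊢
    rw [pow_succ'] at h ⊢
    exact mul_dvd_mul_left _ (ih N' ((mul_dvd_mul_iff_left h2).1 h))

lemma teich_sum {k : ℕ} (hcard : Fintype.card L = 2 ^ k) {e : ℕ} (he : ¬ (2 ^ k - 1 ∣ e)) :
    ∑ x : L, (teichmuller 2 x) ^ e = 0 := by
  classical
  obtain ⟨g, hg⟩ := IsCyclic.exists_generator (α := Lˣ)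
  have hord : orderOf g = 2 ^ k - 1 := by
    rw [orderOf_eq_card_of_forall_mem_zpowers hg, Nat.card_eq_fintype_card, Fintype.card_units, hcard]
  have hne : (g : L) ^ e ≠ 1 := by
    intro h
    apply he
    rw [← hord]
    apply orderOf_dvd_of_pow_eq_one
    exact Units.ext (by simpa using h)
  have h1 : ∑ x : L, (teichmuller 2 x) ^ e =
      (teichmuller 2 (g : L)) ^ e * ∑ x : L, (teichmuller 2 x) ^ e := by
    rw [Finset.mul_sum, ← Equiv.sum_comp (Units.mulLeft g)]
    apply Finset.sum_congr rfl
    intro x _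
    rw [Units.mulLeft_apply, map_mul, mul_pow]
  by_contra hS
  have h2 : (teichmuller 2 (g : L)) ^ e = 1 := by
    have h3 : (1 : WittVector 2 L) * ∑ x : L, (teichmuller 2 x) ^ e =
      (teichmuller 2 (g : L)) ^ e * ∑ x : L, (teichmuller 2 x) ^ e := by rw [one_mul]; exact h1
    exact (mul_right_cancel₀ hS h3).symm
  rw [← map_pow] at h2
  have h3 := congrArg (fun w => WittVector.coeff w 0) h2
  simp only [teichmuller_coeff_zero, WittVector.one_coeff_zero] at h3
  exact hne h3

lemma expsum_dvd [Algebra (ZMod 2) L] {k : ℕ} (hcard : Fintype.card L = 2 ^ k) (g : ℕ) (b : ℕ → L)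
    (E : ℕ) (hE : E ≤ k)
    (hmin : ∀ a : ℕ × ℕ → ℕ, (∑ p ∈ Finset.range (g + 1) ×ˢ Finset.range k, a p = 2 ^ E) →
      (∀ p ∈ Finset.range (g + 1) ×ˢ Finset.range k, a p ≠ 0 → b p.1 ≠ 0) →
      (2 ^ k - 1 ∣ ∑ p ∈ Finset.range (g + 1) ×ˢ Finset.range k, a p * ((2 * p.1 + 1) * 2 ^ p.2)) →
      E ≤ ∑ p ∈ Finset.range (g + 1) ×ˢ Finset.range k, (bitset (a p)).card) :
    (2 : ℤ) ^ E ∣ ∑ x : L, (-1 : ℤ) ^ (Algebra.trace (ZMod 2) L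
      (∑ i ∈ Finset.range (g + 1), b i * x ^ (2 * i + 1))).val := by
  set P := Finset.range (g + 1) ×ˢ Finset.range k with hP
  apply int_dvd_of_witt (L := L)
  have hfin : Module.finrank (ZMod 2) L = k := by
    have := Module.card_eq_pow_finrank (K := ZMod 2) (V := L)
    rw [hcard, ZMod.card] at this
    exact (Nat.pow_right_injective (le_refl 2) this).symm
  set T : L → WittVector 2 L := fun x => ∑ p ∈ P,
    (teichmuller 2 (b p.1)) ^ (2 ^ p.2) * (teichmuller 2 x) ^ ((2 * p.1 + 1) * 2 ^ p.2) with hT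
  have hterm : ∀ x : L, (2 : WittVector 2 L) ^ E ∣
      ((-1 : WittVector 2 L) ^ (Algebra.trace (ZMod 2) L
        (∑ i ∈ Finset.range (g + 1), b i * x ^ (2 * i + 1))).val) - (1 - 2 * T x ^ (2 ^ E)) := by
    intro x
    set tr := Algebra.trace (ZMod 2) L (∑ i ∈ Finset.range (g + 1), b i * x ^ (2 * i + 1)) with htr
    have h1 : WittVector.constantCoeff (T x) = algebraMap (ZMod 2) L tr := by
      rw [htr, FiniteField.algebraMap_trace_eq_sum_pow, hfin, Nat.card_zmod, hT]
      simp only [map_sum, map_mul, map_pow, constantCoeff_apply, teichmuller_coeff_zero]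
      rw [hP, Finset.sum_product_right]
      apply Finset.sum_congr rfl
      intro l _
      rw [sum_pow_char_pow]
      apply Finset.sum_congr rfl
      intro i _
      rw [mul_pow, ← pow_mul]
    have h2 : WittVector.constantCoeff ((tr.val : ℕ) : WittVector 2 L) =
        algebraMap (ZMod 2) L tr := by
      rw [map_natCast, ← map_natCast (algebraMap (ZMod 2) L), ZMod.natCast_zmod_val]
    have h3 : ((2 : ℕ) : WittVector 2 L) ∣ T x - ((tr.val : ℕ) : WittVector 2 L) := by
      have : (2 : WittVector 2 L) ∣ T x - ((tr.val : ℕ) : WittVector 2 L) := by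
        rw [two_dvd_iff, ← constantCoeff_apply, map_sub, h1, h2, sub_self]
      exact_mod_cast this
    have h4 := dvd_sub_pow_of_dvd_sub h3 E
    have hv : tr.val = 0 ∨ tr.val = 1 := by have := ZMod.val_lt tr; omega
    have h5 : ((tr.val : ℕ) : WittVector 2 L) ^ (2 ^ E) = ((tr.val : ℕ) : WittVector 2 L) := by
      rcases hv with h | h <;> rw [h] <;> simp
    have h6 : (-1 : WittVector 2 L) ^ tr.val = 1 - 2 * ((tr.val : ℕ) : WittVector 2 L) := by
      rcases hv with h | h <;> rw [h] <;> norm_num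
    rw [h5] at h4
    rw [h6, show (1 - 2 * ((tr.val : ℕ) : WittVector 2 L)) - (1 - 2 * T x ^ (2 ^ E)) =
      2 * (T x ^ (2 ^ E) - ((tr.val : ℕ) : WittVector 2 L)) by ring]
    apply Dvd.dvd.mul_left
    refine dvd_trans ?_ h4
    push_cast
    exact pow_dvd_pow _ (Nat.le_succ E)
  have hmain : (2 : WittVector 2 L) ^ E ∣ ∑ x : L, (1 - 2 * T x ^ (2 ^ E)) := by
    rw [Finset.sum_sub_distrib]
    apply dvd_sub
    · rw [Finset.sum_const, Finset.card_univ, hcard, nsmul_eq_mul, mul_one]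
      push_cast
      exact pow_dvd_pow _ hE
    · have : ∑ x : L, 2 * T x ^ (2 ^ E) = ∑ a ∈ Finset.piAntidiag P (2 ^ E),
          ((2 * Nat.multinomial P a : ℕ) : WittVector 2 L) *
            ((∏ p ∈ P, ((teichmuller 2 (b p.1)) ^ (2 ^ p.2)) ^ a p) *
            ∑ x : L, (teichmuller 2 x) ^ (∑ p ∈ P, a p * ((2 * p.1 + 1) * 2 ^ p.2))) := by
        simp only [hT, Finset.sum_pow_eq_sum_piAntidiag, Finset.mul_sum]
        rw [Finset.sum_comm]
        apply Finset.sum_congr rfl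
        intro a _
        apply Finset.sum_congr rfl
        intro x _
        simp only [mul_pow]
        rw [Finset.prod_mul_distrib, ← Finset.prod_pow_eq_pow_sum]
        have : ∀ p : ℕ × ℕ, ((teichmuller 2 x) ^ ((2 * p.1 + 1) * 2 ^ p.2)) ^ a p =
            (teichmuller 2 x) ^ (a p * ((2 * p.1 + 1) * 2 ^ p.2)) := by
          intro p; rw [← pow_mul, mul_comm]
        simp only [this]
        push_cast
        ring
      rw [this]
      apply Finset.dvd_sum
      intro a ha
      rw [Finset.mem_piAntidiag] at ha
      by_cases hz : ∀ p ∈ P, a p ≠ 0 → b p.1 ≠ 0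
      · by_cases hd : 2 ^ k - 1 ∣ ∑ p ∈ P, a p * ((2 * p.1 + 1) * 2 ^ p.2)
        · apply Dvd.dvd.mul_right
          have h1 := hmin a ha.1 hz hd
          have h2 := (pow_dvd_pow 2 h1).trans (multinomial_bits P a E ha.1)
          have h3 := Nat.cast_dvd_cast (α := WittVector 2 L) h2
          push_cast at h3 ⊢
          exact h3
        · rw [teich_sum hcard hd]; simp
      · push Not at hz
        obtain ⟨p, hp, hp1, hp2⟩ := hz
        have : ∏ p ∈ P, ((teichmuller 2 (b p.1)) ^ (2 ^ p.2)) ^ a p = 0 := by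
          apply Finset.prod_eq_zero hp
          rw [hp2, teichmuller_zero, zero_pow (by positivity), zero_pow hp1]
        rw [this]; simp
  have := dvd_add (Finset.dvd_sum (fun x (_ : x ∈ Finset.univ) => hterm x)) hmain
  rw [← Finset.sum_add_distrib] at this
  push_cast
  simpa using this
end witt


theorem first_slope_case_iii :
    ∃ N : ℕ, ∀ n : ℕ, N ≤ n → ∀ a : ℕ, 1 ≤ a →
      ∀ (K : Type) [Field K] [Fintype K], Fintype.card K = 2 ^ a →
      ∀ g : ℕ, 2 * g + 1 = 2 ^ (n + 1) - 3 →
      ∀ c : ℕ → K, c (2 * g + 1) ≠ 0 → c (2 ^ n - 1) = 0 → c (3 * 2 ^ (n - 1) - 1) = 0 →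
      ∀ m : ℕ, 1 ≤ m →
      ∀ (L : Type) [Field L] [Fintype L] [Algebra K L] [Algebra (ZMod 2) L],
        Module.finrank K L = m →
        (2 : ℤ) ^ (⌈(2 * a * m : ℚ) / (2 * (n : ℚ) - 1)⌉₊) ∣
          ∑ x : L, (-1 : ℤ) ^
            (Algebra.trace (ZMod 2) L
              (∑ i ∈ Finset.range (g + 1),
                algebraMap K L (c (2 * i + 1)) * x ^ (2 * i + 1))).val := by
  refine ⟨3, ?_⟩
  intro n hn a ha K _ _ hK g hg c _ hc1 hc2 m hm L _ _ _ _ hfr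
  have : CharP L 2 := charP_of_injective_algebraMap (algebraMap (ZMod 2) L).injective 2
  have hcard : Fintype.card L = 2 ^ (a * m) := by
    rw [Module.card_eq_pow_finrank (K := K) (V := L), hK, hfr, pow_mul]
  have hk : 1 ≤ a * m := Nat.mul_pos ha hm
  have hceil : ∀ X : ℕ, 2 * (a * m) ≤ (2 * n - 1) * X →
      ⌈(2 * a * m : ℚ) / (2 * (n : ℚ) - 1)⌉₊ ≤ X := by
    intro X hX
    rw [Nat.ceil_le]
    have hnq : (3 : ℚ) ≤ n := by exact_mod_cast hn
    rw [div_le_iff₀ (by linarith)]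
    have h1 : ((2 * n - 1 : ℕ) : ℚ) = 2 * (n : ℚ) - 1 := by
      rw [Nat.cast_sub (by omega)]; push_cast; ring
    have h2 : ((2 * (a * m) : ℕ) : ℚ) ≤ (((2 * n - 1) * X : ℕ) : ℚ) := by exact_mod_cast hX
    rw [Nat.cast_mul (2 * n - 1), h1] at h2
    push_cast at h2
    linarith
  refine expsum_dvd hcard g (fun i => algebraMap K L (c (2 * i + 1))) _ ?_ ?_
  · apply hceil
    exact Nat.mul_le_mul_right _ (by omega)
  · intro u hu hb hdvd
    apply hceil
    set P := Finset.range (g + 1) ×ˢ Finset.range (a * m) with hP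
    set Q := P.sigma (fun p => bitset (u p)) with hQ
    have hmemQ : ∀ t : Q, t.1.1 ∈ P ∧ t.1.2 ∈ bitset (u t.1.1) := fun t => Finset.mem_sigma.1 t.2
    have hcb : ∀ t : Q, c (2 * t.1.1.1 + 1) ≠ 0 := by
      intro t
      obtain ⟨h1, h2⟩ := hmemQ t
      have h3 : u t.1.1 ≠ 0 := by
        intro h0; rw [h0] at h2; simp [bitset] at h2
      intro h4
      exact hb _ h1 h3 (by rw [h4, map_zero])
    have hne : Nonempty Q := by
      by_contra hcon
      have h0 : ∀ p ∈ P, u p = 0 := by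
        intro p hp
        rw [← sum_bitset (u p)]
        apply Finset.sum_eq_zero
        intro i hi
        exact absurd ⟨⟨⟨p, i⟩, Finset.mem_sigma.2 ⟨hp, hi⟩⟩⟩ hcon
      rw [Finset.sum_eq_zero h0] at hu
      exact absurd hu.symm (by positivity)
    have hsum : ∑ t : Q, 2 ^ (t.1.2 + t.1.1.2) * (2 * t.1.1.1 + 1) =
        ∑ p ∈ P, u p * ((2 * p.1 + 1) * 2 ^ p.2) := by
      rw [Finset.sum_coe_sort Q (fun t => 2 ^ (t.2 + t.1.2) * (2 * t.1.1 + 1)), hQ, Finset.sum_sigma]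
      apply Finset.sum_congr rfl
      intro p _
      conv_rhs => rw [← sum_bitset (u p)]
      rw [Finset.sum_mul]
      apply Finset.sum_congr rfl
      intro i _
      rw [pow_add]; ring
    have := density hk hn (fun t : Q => t.1.2 + t.1.1.2) (fun t : Q => 2 * t.1.1.1 + 1)
      (fun t => ⟨_, rfl⟩)
      (fun t => by
        have h1 := (Finset.mem_product.1 (hmemQ t).1).1
        rw [Finset.mem_range] at h1
        omega)
      (fun t h => hcb t (by rw [h]; exact hc1))
      (fun t h => hcb t (by rw [h]; exact hc2))
      (by rw [hsum]; exact hdvd)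
    rw [Fintype.card_coe, hQ, Finset.card_sigma] at this
    exact this
end
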